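/- arXiv:2209.11319 — 2 statements merged into one kernel-verified Lean document; each statement's English description precedes it below -/
import Mathlib

section
/- For a fixed perfect matching M in K_{2m,2m,2m}, the number of perfect matchings avoiding M equals the sum over 0 ≤ i,j,k ≤ m of (-1)^{i+j+k} C(m,i)C(m,j)C(m,k) C(2m-i-j, m-i) C(2m-j-k, m-j) C(2m-k-i, m-k) (m-i)!(m-j)!(m-k)!. -/
open Nat SimpleGraph Finset

/-- The number of perfect matchings of a graph `G`. -/
noncomputable def pmCount {V : Type} (G : SimpleGraph V) : ℕ :=
  {M : G.Subgraph | M.IsPerfectMatching}.ncard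

/-!
Inclusion–exclusion over the subsets `t` of the fixed matching `M` reduces the theorem to counting
the perfect matchings of the tripartite graphs left after deleting the endpoints of `t`. An edge of
a complete tripartite graph is classified by the class it avoids. If a perfect matching has `a x`
edges avoiding class `x`, then class `x` has `∑ z, a z - a x` vertices, so the class sizes determine
`a`, and all perfect matchings, `M` included, have the same profile `a`. Deleting the endpoints of
`t` subtracts the profile `k` of `t` from `a`, and `∏ x, C(a x, k x)` subsets of `M` have profile
`k`. Finally, matching one vertex in all possible ways gives a recursion for the number of perfect
matchings with profile `a`, solved by
`(a 0 + a 1)! (a 1 + a 2)! (a 2 + a 0)! / ((a 0)! (a 1)! (a 2)!)`.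
-/

/-! ### Products and sums over finite types -/

section

variable {M : Type*} [CommMonoid M]

@[to_additive]
lemma prod_fin_three_of_ne (f : Fin 3 → M) {x y z : Fin 3} (hxy : x ≠ y) (hxz : x ≠ z)
    (hyz : y ≠ z) : ∏ i, f i = f x * f y * f z := by
  have huniv : univ = {x, y, z} := by decide +revert
  rw [huniv, prod_insert (by simp [hxy, hxz]), prod_pair hyz, mul_assoc]

end

section

variable {ι κ : Type*} [Fintype κ] [DecidableEq κ]

lemma card_filter_powerset_card_fiber (T : Finset ι) (f : ι → κ) (k : κ → ℕ) :
    #{t ∈ T.powerset | (fun x => #{i ∈ t | f i = x}) = k} =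
      ∏ x, (#{i ∈ T | f i = x}).choose (k x) := by
  classical
  simp_rw [← card_powersetCard, ← Fintype.card_piFinset]
  have hfiber {s : κ → Finset ι} (hs : ∀ x, s x ⊆ {i ∈ T | f i = x}) (x : κ) :
      {i ∈ univ.biUnion s | f i = x} = s x := by
    ext i
    simp only [mem_filter, mem_biUnion, mem_univ, true_and]
    refine ⟨?_, fun hi => ⟨⟨x, hi⟩, (mem_filter.1 (hs x hi)).2⟩⟩
    rintro ⟨⟨y, hy⟩, rfl⟩
    rwa [(mem_filter.1 (hs y hy)).2]
  refine card_nbij' (fun t x => {i ∈ t | f i = x}) univ.biUnion ?_ ?_ ?_ ?_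
  · intro t ht
    obtain ⟨htT, rfl⟩ := mem_filter.1 ht
    simpa [mem_powersetCard] using fun x => filter_subset_filter _ (mem_powerset.1 htT)
  · intro s hs
    simp only [mem_coe, Fintype.mem_piFinset, mem_powersetCard] at hs
    simp only [coe_filter, mem_powerset, Set.mem_ofPred_eq, biUnion_subset, mem_univ, forall_const]
    exact ⟨fun x => (hs x).1.trans (filter_subset _ _),
      funext fun x => by rw [hfiber fun y => (hs y).1, (hs x).2]⟩
  · intro t _
    ext i
    simp
  · intro s hs
    simp only [mem_coe, Fintype.mem_piFinset, mem_powersetCard] at hs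
    exact funext (hfiber fun y => (hs y).1)

lemma sum_powerset_apply_card_fiber {M : Type*} [AddCommMonoid M] (T : Finset ι) (f : ι → κ)
    (F : (κ → ℕ) → M) :
    ∑ t ∈ T.powerset, F (fun x => #{i ∈ t | f i = x}) =
      ∑ k ∈ Fintype.piFinset fun x => range (#{i ∈ T | f i = x} + 1),
        (∏ x, (#{i ∈ T | f i = x}).choose (k x)) • F k := by
  have hmaps : ∀ t ∈ T.powerset, (fun x => #{i ∈ t | f i = x}) ∈
      Fintype.piFinset fun x => range (#{i ∈ T | f i = x} + 1) := by
    intro t ht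
    rw [Fintype.mem_piFinset]
    exact fun x => mem_range_succ_iff.2 <|
      card_le_card <| filter_subset_filter _ <| mem_powerset.1 ht
  rw [← sum_fiberwise_of_maps_to hmaps]
  refine sum_congr rfl fun k _ => ?_
  rw [sum_congr rfl fun t ht => by rw [(mem_filter.1 ht).2], sum_const,
    card_filter_powerset_card_fiber]

end

lemma sum_piFinset_fin_three {α M : Type*} [AddCommMonoid M] (s : Fin 3 → Finset α)
    (F : (Fin 3 → α) → M) :
    ∑ k ∈ Fintype.piFinset s, F k = ∑ i ∈ s 0, ∑ j ∈ s 1, ∑ k ∈ s 2, F ![i, j, k] := by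
  simp_rw [← sum_product']
  refine sum_nbij' (fun k => (k 0, k 1, k 2)) (fun p => ![p.1, p.2.1, p.2.2]) ?_ ?_ ?_ ?_ ?_
  · exact fun k hk => by simpa [Fin.forall_fin_succ] using hk
  · exact fun p hp => by simpa [Fin.forall_fin_succ] using hp
  · exact fun k _ => by ext x; fin_cases x <;> rfl
  · exact fun p _ => rfl
  · exact fun k _ => congrArg F (by ext x; fin_cases x <;> rfl)

/-- The recursion solved by `(p + q)! * (q + r)! * (r + p)! / (p! * q! * r!)`, with denominators
cleared: a vertex of the class of size `q + r` has `r + p` and `p + q` candidate partners in the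
other two classes. -/
lemma factorial_mul_factorial_recurrence {p q r : ℕ} (hqr : 0 < q + r) :
    (r + p) * (r * ((q + r - 1)! * (r + p - 1)! * (p + q)!)) +
      (p + q) * (q * ((q + r - 1)! * (p + q - 1)! * (r + p)!)) =
        (q + r)! * (r + p)! * (p + q)! := by
  have hpred {i : ℕ} (j : ℕ) : i * ((i + j) * (i + j - 1)!) = i * (i + j)! := by
    rcases i.eq_zero_or_pos with rfl | hi
    · simp
    · rw [Nat.mul_factorial_pred (by lia)]
  have hr := hpred (i := r) p
  have hq := hpred (i := q) p
  rw [add_comm q p] at hq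
  rw [← Nat.mul_factorial_pred hqr.ne']
  linear_combination (q + r - 1)! * (p + q)! * hr + (q + r - 1)! * (r + p)! * hq

/-! ### Perfect matchings as partner maps -/

/-- A perfect matching of `G`, encoded by the involution that sends each vertex to its partner. -/
@[ext]
structure PartnerMap {V : Type} (G : SimpleGraph V) where
  toFun : V → V
  involutive' : Function.Involutive toFun
  adj' : ∀ v, G.Adj v (toFun v)

namespace PartnerMap

variable {V : Type} {G : SimpleGraph V}

instance : CoeFun (PartnerMap G) fun _ => V → V := ⟨toFun⟩

lemma involutive (f : PartnerMap G) : Function.Involutive f := f.involutive'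

lemma apply_apply_congr {H : SimpleGraph V} (f : PartnerMap G) (g : PartnerMap H) {v : V}
    (hfg : f v = g v) : f (g v) = g (g v) := by
  rw [g.involutive v, ← hfg, f.involutive v]

lemma adj (f : PartnerMap G) (v : V) : G.Adj v (f v) := f.adj' v

instance [Finite V] : Finite (PartnerMap G) :=
  Finite.of_injective toFun fun _ _ => PartnerMap.ext

/-- The perfect matching encoded by a partner map, as a subgraph. -/
def toSubgraph (f : PartnerMap G) : G.Subgraph where
  verts := Set.univ
  Adj v w := f v = w
  adj_sub := by rintro v _ rfl; exact f.adj v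
  edge_vert _ := Set.mem_univ _
  symm := ⟨by rintro v _ rfl; exact f.involutive v⟩

lemma toSubgraph_adj (f : PartnerMap G) {v w : V} : f.toSubgraph.Adj v w ↔ f v = w := Iff.rfl

lemma isPerfectMatching_toSubgraph (f : PartnerMap G) : f.toSubgraph.IsPerfectMatching :=
  Subgraph.isPerfectMatching_iff.2 fun v => ⟨f v, rfl, fun _ hw => Eq.symm hw⟩

lemma toSubgraph_injective : Function.Injective (toSubgraph (G := G)) := fun f g hfg =>
  PartnerMap.ext <| funext fun v => f.toSubgraph_adj.1 <| hfg ▸ (rfl : g v = g v)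

lemma exists_toSubgraph_eq {M : G.Subgraph} (hM : M.IsPerfectMatching) :
    ∃ f : PartnerMap G, f.toSubgraph = M := by
  choose f hf hf_unique using Subgraph.isPerfectMatching_iff.1 hM
  refine ⟨⟨f, fun v => (hf_unique _ v (hf v).symm).symm, fun v => (hf v).adj_sub⟩, ?_⟩
  refine Subgraph.ext (Set.eq_univ_of_forall hM.2).symm ?_
  ext v w
  exact ⟨fun h => h ▸ hf v, fun h => (hf_unique v w h).symm⟩

end PartnerMap

section

variable {V : Type} {G : SimpleGraph V}

lemma pmCount_eq_card_partnerMap (G : SimpleGraph V) : pmCount G = Nat.card (PartnerMap G) := by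
  have hrange : {M : G.Subgraph | M.IsPerfectMatching} = Set.range PartnerMap.toSubgraph :=
    Set.Subset.antisymm (fun _ hM => PartnerMap.exists_toSubgraph_eq hM)
      (Set.range_subset_iff.2 PartnerMap.isPerfectMatching_toSubgraph)
  rw [pmCount, hrange, ← Nat.card_coe_set_eq,
    Nat.card_range_of_injective PartnerMap.toSubgraph_injective]

lemma ncard_partnerMap_eqOn {g : V → V} {S : Set V} (hmaps : Set.MapsTo g S S)
    (hinv : Set.LeftInvOn g g S) (hadj : ∀ v ∈ S, G.Adj v (g v)) :
    {f : PartnerMap G | Set.EqOn f g S}.ncard = pmCount (G.induce Sᶜ) := by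
  classical
  have mapsTo_compl {f : PartnerMap G} (hf : Set.EqOn f g S) : Set.MapsTo f Sᶜ Sᶜ :=
    fun v hv hfv => hv <| f.involutive v ▸ (hf.symm.mapsTo_iff.1 hmaps hfv)
  rw [pmCount_eq_card_partnerMap, ← Nat.card_coe_set_eq]
  refine Nat.card_congr
    { toFun f :=
        { toFun := (mapsTo_compl f.2).restrict
          involutive' v := Subtype.ext (f.1.involutive v)
          adj' v := f.1.adj v }
      invFun f :=
        ⟨{  toFun v := if hv : v ∈ S then g v else f ⟨v, hv⟩
            involutive' v := ?_
            adj' v := ?_ }, fun v hv => dif_pos hv⟩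
      left_inv f := ?_
      right_inv f := ?_ }
  · by_cases hv : v ∈ S
    · simp [hv, hmaps hv, hinv hv]
    · have hfv : (f ⟨v, hv⟩ : V) ∉ S := (f ⟨v, hv⟩).2
      simp [hv, hfv, f.involutive ⟨v, hv⟩]
  · by_cases hv : v ∈ S
    · simpa [hv] using hadj v hv
    · simpa [hv] using f.adj ⟨v, hv⟩
  · ext v
    by_cases hv : v ∈ S
    · simpa [hv] using (f.2 hv).symm
    · simp [hv]
  · ext v
    have hv : (v : V) ∉ S := v.2
    simp [hv]

lemma pmCount_sdiff_toSubgraph (g : PartnerMap G) {T : Finset V} (hT : ∀ v, v ∈ T ∨ g v ∈ T) :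
    pmCount (G \ g.toSubgraph.spanningCoe) =
      {f : PartnerMap G | ∀ v ∈ T, f v ≠ g v}.ncard := by
  have hne_of_forall {f : PartnerMap G} (hf : ∀ v ∈ T, f v ≠ g v) (v : V) : f v ≠ g v := by
    intro hfv
    rcases hT v with hv | hgv
    · exact hf v hv hfv
    · exact hf (g v) hgv (f.apply_apply_congr g hfv)
  rw [pmCount_eq_card_partnerMap, ← Nat.card_coe_set_eq]
  exact Nat.card_congr
    { toFun f := ⟨⟨f, f.involutive, fun v => (f.adj v).1⟩, fun v _ hfv => (f.adj v).2 hfv.symm⟩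
      invFun f := ⟨f.1, f.1.involutive, fun v => ⟨f.1.adj v, (hne_of_forall f.2 v).symm⟩⟩
      left_inv _ := rfl
      right_inv _ := rfl }

lemma pmCount_of_isEmpty [IsEmpty V] (G : SimpleGraph V) : pmCount G = 1 := by
  have : Unique (PartnerMap G) :=
    ⟨⟨⟨isEmptyElim, isEmptyElim, isEmptyElim⟩⟩, fun _ => PartnerMap.ext (Subsingleton.elim _ _)⟩
  rw [pmCount_eq_card_partnerMap, Nat.card_unique]

variable [Finite V]

theorem pmCount_eq_sum_neighborFinset (v : V) [Fintype (G.neighborSet v)] :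
    pmCount G = ∑ w ∈ G.neighborFinset v, pmCount (G.induce {v, w}ᶜ) := by
  classical
  have := Fintype.ofFinite (PartnerMap G)
  rw [pmCount_eq_card_partnerMap, Nat.card_eq_fintype_card, ← Finset.card_univ,
    card_eq_sum_card_fiberwise (f := fun f : PartnerMap G => f v) (t := G.neighborFinset v)
      fun f _ => by simpa using f.adj v]
  refine sum_congr rfl fun w hw => ?_
  have hvw : G.Adj v w := by simpa using hw
  have heqOn (f : PartnerMap G) : f v = w ↔ Set.EqOn f (Equiv.swap v w) {v, w} := by
    simp only [Set.EqOn, Set.mem_insert_iff, Set.mem_singleton_iff, forall_eq_or_imp, forall_eq,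
      Equiv.swap_apply_left, Equiv.swap_apply_right, iff_self_and]
    rintro rfl
    exact f.involutive v
  rw [← ncard_partnerMap_eqOn (g := Equiv.swap v w), ← Set.ncard_coe_finset]
  · simp [heqOn]
  · rintro u (rfl | rfl) <;> simp
  · exact fun u _ => Equiv.swap_apply_self v w u
  · rintro u (rfl | rfl)
    · simpa using hvw
    · simpa using hvw.symm

theorem pmCount_eq_zero_of_isIndepSet {S : Set V} (hS : G.IsIndepSet S)
    (hcard : Sᶜ.ncard < S.ncard) : pmCount G = 0 := by
  rw [pmCount_eq_card_partnerMap, Nat.card_eq_zero]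
  refine Or.inl ⟨fun f => hcard.not_ge ?_⟩
  exact Set.ncard_le_ncard_of_injOn f
    (fun v hv hfv => hS hv hfv (f.adj v).ne (f.adj v)) f.involutive.injective.injOn

theorem pmCount_sdiff_toSubgraph_eq_sum_powerset (g : PartnerMap G) {T : Finset V}
    (hT : ∀ v, v ∈ T ∨ g v ∈ T) :
    (pmCount (G \ g.toSubgraph.spanningCoe) : ℤ) =
      ∑ t ∈ T.powerset, (-1) ^ #t * (pmCount (G.induce (↑t ∪ g '' t)ᶜ) : ℤ) := by
  classical
  have := Fintype.ofFinite (PartnerMap G)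
  have hclosed (t : Finset V) : Set.MapsTo g (↑t ∪ g '' t) (↑t ∪ g '' t) := by
    rintro _ (hv | ⟨v, hv, rfl⟩)
    · exact Or.inr ⟨_, hv, rfl⟩
    · exact Or.inl (by rwa [g.involutive v])
  let agree (v : V) : Finset (PartnerMap G) := {f | f v = g v}
  have hagree (t : Finset V) :
      ((t.inf agree : Finset (PartnerMap G)) : Set (PartnerMap G)) =
        {f : PartnerMap G | Set.EqOn f g (↑t ∪ g '' t)} := by
    ext f
    simp only [agree, mem_coe, mem_inf, mem_filter_univ, Set.mem_ofPred_eq, Set.eqOn_union]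
    refine ⟨fun hf => ⟨hf, ?_⟩, fun hf => hf.1⟩
    rintro _ ⟨v, hv, rfl⟩
    exact f.apply_apply_congr g (hf v hv)
  calc (pmCount (G \ g.toSubgraph.spanningCoe) : ℤ)
      = #(T.inf fun v => (agree v)ᶜ) := by
        rw [pmCount_sdiff_toSubgraph g hT, ← Set.ncard_coe_finset]
        congr 2
        ext f
        simp [agree, mem_inf]
    _ = ∑ t ∈ T.powerset, (-1) ^ #t * (#(t.inf agree) : ℤ) :=
        inclusion_exclusion_card_inf_compl T agree
    _ = ∑ t ∈ T.powerset, (-1) ^ #t * (pmCount (G.induce (↑t ∪ g '' t)ᶜ) : ℤ) := by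
        refine sum_congr rfl fun t _ => ?_
        rw [← ncard_partnerMap_eqOn (hclosed t) (fun v _ => g.involutive v) (fun v _ => g.adj v),
          ← hagree t, Set.ncard_coe_finset]

end

/-! ### Edge profiles -/

section

variable {V α : Type*} (c : V → α)

lemma ncard_preimage_comp_coe_compl_add [Finite V] (S : Set V) (x : α) :
    ((fun v : ↥Sᶜ => c v) ⁻¹' {x}).ncard + (S ∩ c ⁻¹' {x}).ncard = (c ⁻¹' {x}).ncard := by
  have himage : (↑) '' ((fun v : ↥Sᶜ => c v) ⁻¹' {x}) = c ⁻¹' {x} \ S := by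
    rw [Set.sdiff_eq, Set.inter_comm, ← Subtype.image_preimage_coe]
    rfl
  rw [← Set.ncard_image_of_injective _ Subtype.val_injective, himage, Set.inter_comm, add_comm]
  exact Set.ncard_inter_add_ncard_sdiff_eq_ncard _ _

lemma sum_neighborFinset_comap_top {M : Type*} [AddCommMonoid M] [Fintype α] [DecidableEq α]
    (v : V) [Fintype (((⊤ : SimpleGraph α).comap c).neighborSet v)] (h : α → M) :
    ∑ w ∈ ((⊤ : SimpleGraph α).comap c).neighborFinset v, h (c w) =
      ∑ y ∈ univ.erase (c v), (c ⁻¹' {y}).ncard • h y := by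
  rw [← sum_fiberwise_of_maps_to (t := univ.erase (c v)) (g := c) fun w hw => by
    simpa [eq_comm] using hw]
  refine sum_congr rfl fun y hy => ?_
  rw [sum_congr rfl fun w hw => by rw [(mem_filter.1 hw).2], sum_const,
    ← Set.ncard_coe_finset]
  congr 2
  ext w
  have hy' := (mem_erase.1 hy).1
  simp only [coe_filter, mem_neighborFinset, comap_adj, top_adj, Set.mem_ofPred_eq,
    Set.mem_preimage, Set.mem_singleton_iff, and_iff_right_iff_imp]
  rintro rfl
  exact hy'.symm

end

/-- The colour other than `x` and `y`, provided that `x ≠ y`. -/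
def thirdColor (x y : Fin 3) : Fin 3 := -(x + y)

lemma thirdColor_eq_iff {x y z : Fin 3} (hxy : x ≠ y) :
    thirdColor x y = z ↔ z ≠ x ∧ z ≠ y := by
  unfold thirdColor
  decide +revert

section

variable {V : Type*}

/-- A perfect matching of the complete tripartite graph with classes `c ⁻¹' {x}` has `a x` edges
that avoid the class `x`: as each of the other edges has one vertex in that class, this amounts to
a condition on the sizes of the classes. -/
def IsEdgeProfile (c : V → Fin 3) (a : Fin 3 → ℕ) : Prop :=
  ∀ x, (c ⁻¹' {x}).ncard + a x = ∑ z, a z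

/-- For each colour, the number of edges `{v, g v}` with `v ∈ t` that avoid it. -/
def edgeProfile (c : V → Fin 3) (g : V → V) (t : Finset V) (x : Fin 3) : ℕ :=
  #{v ∈ t | thirdColor (c v) (c (g v)) = x}

variable {c : V → Fin 3} {a : Fin 3 → ℕ}

lemma IsEdgeProfile.ncard_preimage_eq_add (ha : IsEdgeProfile c a) {x y z : Fin 3} (hxy : x ≠ y)
    (hxz : x ≠ z) (hyz : y ≠ z) : (c ⁻¹' {x}).ncard = a y + a z := by
  have := ha x
  rw [sum_fin_three_of_ne a hxy hxz hyz] at this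
  lia

lemma IsEdgeProfile.unique {b : Fin 3 → ℕ} (ha : IsEdgeProfile c a) (hb : IsEdgeProfile c b) :
    a = b := by
  have hsum {d : Fin 3 → ℕ} (hd : IsEdgeProfile c d) :
      ∑ x, (c ⁻¹' {x}).ncard = 2 * ∑ z, d z := by
    have hsum_add : ∑ x, ((c ⁻¹' {x}).ncard + d x) = 3 * ∑ z, d z := by
      simp only [hd _, sum_const, Finset.card_univ, Fintype.card_fin, smul_eq_mul]
    rw [sum_add_distrib] at hsum_add
    lia
  have hsum_a := hsum ha
  have hsum_b := hsum hb
  funext x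
  have hax := ha x
  have hbx := hb x
  lia

lemma sum_edgeProfile (c : V → Fin 3) (g : V → V) (t : Finset V) :
    ∑ x, edgeProfile c g t x = #t :=
  (card_eq_sum_card_fiberwise fun _ _ => mem_coe.2 (mem_univ _)).symm

lemma edgeProfile_mono (c : V → Fin 3) (g : V → V) : Monotone (edgeProfile c g) :=
  fun _ _ hst _ => card_le_card (filter_subset_filter _ hst)

lemma ncard_inter_preimage_add_edgeProfile {g : V → V} {t : Finset V} (hinj : Set.InjOn g t)
    (hdisj : ∀ v ∈ t, g v ∉ t) (hc : ∀ v ∈ t, c v ≠ c (g v)) (x : Fin 3) :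
    ((↑t ∪ g '' t) ∩ c ⁻¹' {x}).ncard + edgeProfile c g t x = #t := by
  classical
  have hunion : (↑t ∪ g '' t) ∩ c ⁻¹' {x} =
      (({v ∈ t | c v = x} ∪ {v ∈ t | c (g v) = x}.image g : Finset V) : Set V) := by
    ext v
    simp only [coe_union, coe_image, coe_filter]
    aesop
  have hdisj' : Disjoint {v ∈ t | c v = x} ({v ∈ t | c (g v) = x}.image g) := by
    simp only [disjoint_right, mem_image, mem_filter]
    rintro _ ⟨v, ⟨hv, -⟩, rfl⟩ ⟨hgv, -⟩
    exact hdisj v hv hgv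
  rw [hunion, Set.ncard_coe_finset, card_union_of_disjoint hdisj',
    Finset.card_image_of_injOn (hinj.mono (filter_subset _ _)), edgeProfile, card_filter,
    card_filter, card_filter, ← sum_add_distrib, ← sum_add_distrib, card_eq_sum_ones]
  refine sum_congr rfl fun v hv => ?_
  have hcv := hc v hv
  simp only [thirdColor_eq_iff hcv]
  grind

lemma ncard_preimage_compl_add_sum_edgeProfile [Finite V] {g : V → V} {t : Finset V}
    (hinj : Set.InjOn g t) (hdisj : ∀ v ∈ t, g v ∉ t) (hc : ∀ v ∈ t, c v ≠ c (g v)) (x : Fin 3) :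
    ((fun v : ↥((↑t ∪ g '' t)ᶜ : Set V) => c v) ⁻¹' {x}).ncard + ∑ z, edgeProfile c g t z =
      (c ⁻¹' {x}).ncard + edgeProfile c g t x := by
  rw [sum_edgeProfile, ← ncard_preimage_comp_coe_compl_add c (↑t ∪ g '' t) x, add_assoc,
    ncard_inter_preimage_add_edgeProfile hinj hdisj hc]

lemma ncard_preimage_compl_pair_add_one [Finite V] {v w : V} {z : Fin 3} (hvw : c v ≠ c w)
    (hvz : c v ≠ z) (hwz : c w ≠ z) (x : Fin 3) :
    ((fun u : ↥({v, w}ᶜ : Set V) => c u) ⁻¹' {x}).ncard + 1 =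
      (c ⁻¹' {x}).ncard + if x = z then 1 else 0 := by
  have hne : w ≠ v := fun h => hvw (h ▸ rfl)
  have hcard := ncard_preimage_compl_add_sum_edgeProfile (c := c) (g := fun _ => w) (t := {v})
    (by simp) (by simp [hne]) (by simpa using hvw) x
  rw [sum_edgeProfile, edgeProfile, card_filter, sum_singleton,
    (thirdColor_eq_iff hvw).2 ⟨hvz.symm, hwz.symm⟩, card_singleton, coe_singleton,
    Set.image_singleton, Set.singleton_union] at hcard
  simpa only [eq_comm] using hcard

lemma IsEdgeProfile.sub {W : Type*} {d : W → Fin 3} {b : Fin 3 → ℕ} (ha : IsEdgeProfile c a)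
    (hle : b ≤ a)
    (hcard : ∀ x, (d ⁻¹' {x}).ncard + ∑ z, b z = (c ⁻¹' {x}).ncard + b x) :
    IsEdgeProfile d (a - b) := by
  intro x
  have hsum : ∑ z, (a - b) z + ∑ z, b z = ∑ z, a z := by
    rw [← sum_add_distrib]
    exact sum_congr rfl fun z _ => Nat.sub_add_cancel (hle z)
  have hax := ha x
  have hlex := hle x
  have hcardx := hcard x
  rw [Pi.sub_apply]
  lia

lemma isEdgeProfile_edgeProfile {g : V → V} (hg : Function.Involutive g) {T : Finset V}
    (hT : ∀ v, v ∈ T ↔ g v ∉ T) (hc : ∀ v, c v ≠ c (g v)) :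
    IsEdgeProfile c (edgeProfile c g T) := by
  intro x
  have huniv : (↑T ∪ g '' T : Set V) = Set.univ := Set.eq_univ_of_forall fun v => by
    by_cases hv : v ∈ T
    · exact Or.inl hv
    · exact Or.inr ⟨g v, not_not.1 fun h => hv ((hT v).2 h), hg v⟩
  have hcover := ncard_inter_preimage_add_edgeProfile hg.injective.injOn
    (fun v hv => (hT v).1 hv) (fun v _ => hc v) x
  rwa [huniv, Set.univ_inter, ← sum_edgeProfile c g T] at hcover

end

/-! ### Complete tripartite graphs -/

/-- The number of perfect matchings of a complete tripartite graph in terms of the edge profile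
shared by all of them. -/
def tripartiteCount (a : Fin 3 → ℕ) : ℕ :=
  ∏ x, (a x + a (x + 1)).choose (a x) * (a x)!

lemma prod_factorial_mul_tripartiteCount (a : Fin 3 → ℕ) :
    (∏ x, (a x)!) * tripartiteCount a = ∏ x, (a x + a (x + 1))! := by
  rw [tripartiteCount, ← Equiv.prod_comp (Equiv.addRight 1) fun x => (a x)!, ← prod_mul_distrib]
  refine prod_congr rfl fun x _ => ?_
  simpa [mul_comm] using
    Nat.choose_mul_factorial_mul_factorial (Nat.le_add_right (a x) (a (x + 1)))

section

variable {V : Type} [Finite V] {c : V → Fin 3} {a : Fin 3 → ℕ}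

lemma pmCount_comap_top_eq_zero {x y z : Fin 3} (hxy : x ≠ y) (hxz : x ≠ z) (hyz : y ≠ z)
    (hlt : (c ⁻¹' {x}).ncard + (c ⁻¹' {y}).ncard < (c ⁻¹' {z}).ncard) :
    pmCount ((⊤ : SimpleGraph (Fin 3)).comap c) = 0 := by
  have hthird : ∀ {x y z : Fin 3}, x ≠ y → x ≠ z → y ≠ z → ∀ u, u ≠ z ↔ u = x ∨ u = y := by decide
  have hcompl : (c ⁻¹' {z})ᶜ = c ⁻¹' {x} ∪ c ⁻¹' {y} := by
    ext v
    exact hthird hxy hxz hyz (c v)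
  refine pmCount_eq_zero_of_isIndepSet (S := c ⁻¹' {z}) (fun v hv w hw _ hvw => ?_)
    (hcompl ▸ (Set.ncard_union_le _ _).trans_lt hlt)
  exact hvw (hv.trans hw.symm)

lemma IsEdgeProfile.pmCount_induce_compl_pair_eq_zero (ha : IsEdgeProfile c a) {v w : V}
    {z : Fin 3} (hvw : c v ≠ c w) (hvz : c v ≠ z) (hwz : c w ≠ z) (haz : a z = 0) :
    pmCount (((⊤ : SimpleGraph (Fin 3)).comap c).induce {v, w}ᶜ) = 0 := by
  refine pmCount_comap_top_eq_zero (c := fun u : ↥({v, w}ᶜ : Set V) => c u) hvw hvz hwz ?_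
  have hsize := ncard_preimage_compl_pair_add_one hvw hvz hwz
  have hsize_v := hsize (c v)
  have hsize_w := hsize (c w)
  have hsize_z := hsize z
  rw [if_neg hvz, ha.ncard_preimage_eq_add hvw hvz hwz] at hsize_v
  rw [if_neg hwz, ha.ncard_preimage_eq_add hvw.symm hwz hvz] at hsize_w
  rw [if_pos rfl, ha.ncard_preimage_eq_add hvz.symm hwz.symm hvw] at hsize_z
  lia

lemma IsEdgeProfile.compl_pair (ha : IsEdgeProfile c a) {v w : V} {z : Fin 3} (hvw : c v ≠ c w)
    (hvz : c v ≠ z) (hwz : c w ≠ z) (haz : 0 < a z) :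
    IsEdgeProfile (fun u : ↥({v, w}ᶜ : Set V) => c u) (a - Pi.single z 1) := by
  have hle : Pi.single z 1 ≤ a := by
    intro x
    rcases eq_or_ne x z with rfl | hx
    · simpa using Nat.succ_le_of_lt haz
    · simp [hx]
  exact ha.sub hle fun x => by
    simpa [Pi.single_apply] using ncard_preimage_compl_pair_add_one hvw hvz hwz x

lemma IsEdgeProfile.prod_factorial_mul_pmCount_induce_compl_pair (ha : IsEdgeProfile c a)
    {v w : V} {z : Fin 3} (hvw : c v ≠ c w) (hvz : c v ≠ z) (hwz : c w ≠ z)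
    (ih : ∀ b, IsEdgeProfile (fun u : ↥({v, w}ᶜ : Set V) => c u) b →
      (∏ x, (b x)!) * pmCount (((⊤ : SimpleGraph (Fin 3)).comap c).induce {v, w}ᶜ) =
        ∏ x, ((fun u : ↥({v, w}ᶜ : Set V) => c u) ⁻¹' {x}).ncard !) :
    (∏ x, (a x)!) * pmCount (((⊤ : SimpleGraph (Fin 3)).comap c).induce {v, w}ᶜ) =
      a z * (((c ⁻¹' {c v}).ncard - 1)! * ((c ⁻¹' {c w}).ncard - 1)! * (c ⁻¹' {z}).ncard !) := by
  rcases (a z).eq_zero_or_pos with haz | haz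
  · rw [ha.pmCount_induce_compl_pair_eq_zero hvw hvz hwz haz, haz, mul_zero, zero_mul]
  · have hsize := ncard_preimage_compl_pair_add_one hvw hvz hwz
    have hsize_v := hsize (c v)
    have hsize_w := hsize (c w)
    have hsize_z := hsize z
    rw [if_neg hvz, add_zero] at hsize_v
    rw [if_neg hwz, add_zero] at hsize_w
    rw [if_pos rfl, add_left_inj] at hsize_z
    have hprod := ih _ (ha.compl_pair hvw hvz hwz haz)
    simp only [prod_fin_three_of_ne _ hvw hvz hwz, Pi.sub_apply, Pi.single_eq_same,
      Pi.single_eq_of_ne hvz, Pi.single_eq_of_ne hwz, tsub_zero, hsize_z] at hprod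
    rw [← hsize_v, ← hsize_w, Nat.add_sub_cancel, Nat.add_sub_cancel, ← hprod,
      prod_fin_three_of_ne _ hvw hvz hwz, ← Nat.mul_factorial_pred haz.ne']
    ring

theorem IsEdgeProfile.prod_factorial_mul_pmCount (ha : IsEdgeProfile c a) :
    (∏ x, (a x)!) * pmCount ((⊤ : SimpleGraph (Fin 3)).comap c) =
      ∏ x, (c ⁻¹' {x}).ncard ! := by
  classical
  induction hn : Nat.card V using Nat.strong_induction_on generalizing V a with
  | _ n ih =>
    have := Fintype.ofFinite V
    rcases isEmpty_or_nonempty V with hV | ⟨⟨v⟩⟩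
    · have ha0 : a = 0 := ha.unique fun x => by simp [Set.eq_empty_of_isEmpty]
      simp [ha0, pmCount_of_isEmpty, Set.eq_empty_of_isEmpty]
    obtain ⟨y, z, hxy, hxz, hyz, herase⟩ :
        ∃ y z, c v ≠ y ∧ c v ≠ z ∧ y ≠ z ∧ univ.erase (c v) = {y, z} := by
      generalize c v = x
      decide +revert
    have hx_pos : 0 < (c ⁻¹' {c v}).ncard := (Set.ncard_pos).2 ⟨v, rfl⟩
    rw [pmCount_eq_sum_neighborFinset v, mul_sum]
    let term (y : Fin 3) : ℕ := a (thirdColor (c v) y) *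
      (((c ⁻¹' {c v}).ncard - 1)! * ((c ⁻¹' {y}).ncard - 1)! *
        (c ⁻¹' {thirdColor (c v) y}).ncard !)
    calc _ = ∑ w ∈ ((⊤ : SimpleGraph (Fin 3)).comap c).neighborFinset v, term (c w) := by
          refine sum_congr rfl fun w hw => ?_
          have hvw : c v ≠ c w := by simpa using hw
          obtain ⟨hthird_v, hthird_w⟩ := (thirdColor_eq_iff hvw).1 rfl
          have hlt : Nat.card ↥({v, w}ᶜ : Set V) < n :=
            hn ▸ Finite.card_subtype_lt (x := v) (by simp)
          exact ha.prod_factorial_mul_pmCount_induce_compl_pair hvw hthird_v.symm hthird_w.symm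
            fun b hb => ih _ hlt hb rfl
      _ = (c ⁻¹' {y}).ncard * term y + (c ⁻¹' {z}).ncard * term z := by
          rw [sum_neighborFinset_comap_top, herase, sum_pair hyz, smul_eq_mul, smul_eq_mul]
      _ = ∏ x, (c ⁻¹' {x}).ncard ! := by
          rw [prod_fin_three_of_ne _ hxy hxz hyz]
          simp only [term, (thirdColor_eq_iff hxy).2 ⟨hxz.symm, hyz.symm⟩,
            (thirdColor_eq_iff hxz).2 ⟨hxy.symm, hyz⟩]
          rw [ha.ncard_preimage_eq_add hxy hxz hyz] at hx_pos ⊢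
          rw [ha.ncard_preimage_eq_add hyz hxy.symm hxz.symm,
            ha.ncard_preimage_eq_add hxz.symm hyz.symm hxy]
          exact factorial_mul_factorial_recurrence hx_pos

theorem IsEdgeProfile.pmCount_comap_top (ha : IsEdgeProfile c a) :
    pmCount ((⊤ : SimpleGraph (Fin 3)).comap c) = tripartiteCount a := by
  refine Nat.eq_of_mul_eq_mul_left (prod_pos fun x (_ : x ∈ univ) => Nat.factorial_pos (a x)) ?_
  rw [ha.prod_factorial_mul_pmCount, prod_factorial_mul_tripartiteCount,
    ← Equiv.prod_comp (Equiv.addRight 2)]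
  refine prod_congr rfl fun x _ => ?_
  have hne : x + 2 ≠ x ∧ x + 2 ≠ x + 1 ∧ x ≠ x + 1 := by decide +revert
  rw [Equiv.coe_addRight, ha.ncard_preimage_eq_add hne.1 hne.2.1 hne.2.2]

theorem IsEdgeProfile.pmCount_sdiff_toSubgraph (ha : IsEdgeProfile c a)
    (g : PartnerMap ((⊤ : SimpleGraph (Fin 3)).comap c)) :
    (pmCount ((⊤ : SimpleGraph (Fin 3)).comap c \ g.toSubgraph.spanningCoe) : ℤ) =
      ∑ k ∈ Fintype.piFinset fun x => range (a x + 1),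
        (∏ x, (a x).choose (k x)) • ((-1) ^ (∑ x, k x) * (tripartiteCount (a - k) : ℤ)) := by
  classical
  have := Fintype.ofFinite V
  -- The cyclic order of the three classes selects one endpoint of each edge of the matching.
  let T : Finset V := {v | c (g v) = c v + 1}
  have hc (v : V) : c v ≠ c (g v) := g.adj v
  have hT (v : V) : v ∈ T ↔ g v ∉ T := by
    have hsucc : ∀ x y : Fin 3, x ≠ y → (y = x + 1 ↔ ¬x = y + 1) := by decide
    simpa [T, g.involutive v] using hsucc _ _ (hc v)
  have hprofile : edgeProfile c g T = a :=
    (isEdgeProfile_edgeProfile g.involutive hT hc).unique ha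
  let term (k : Fin 3 → ℕ) : ℤ := (-1) ^ (∑ x, k x) * tripartiteCount (a - k)
  calc _ = ∑ t ∈ T.powerset, (-1) ^ #t *
          (pmCount (((⊤ : SimpleGraph (Fin 3)).comap c).induce (↑t ∪ g '' t)ᶜ) : ℤ) :=
        pmCount_sdiff_toSubgraph_eq_sum_powerset g fun v => by
          rw [hT v]
          exact (em (g v ∈ T)).symm
    _ = ∑ t ∈ T.powerset, term (edgeProfile c g t) := by
        refine sum_congr rfl fun t ht => ?_
        have htT := mem_powerset.1 ht
        have hle : edgeProfile c g t ≤ a := hprofile ▸ edgeProfile_mono c g htT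
        have ha_compl := ha.sub hle <| ncard_preimage_compl_add_sum_edgeProfile
          g.involutive.injective.injOn (fun v hv hgv => (hT v).1 (htT hv) (htT hgv))
          fun v _ => hc v
        simp only [term, ← ha_compl.pmCount_comap_top, sum_edgeProfile]
        rfl
    _ = _ := by
        subst hprofile
        exact sum_powerset_apply_card_fiber T (fun v => thirdColor (c v) (c (g v))) term

end

/-- Here `p`, `q`, `r` are the numbers of edges of any perfect matching avoiding the classes
`0`, `1`, `2`. -/
theorem stmt_9_general {V : Fin 3 → Type} [∀ x, Finite (V x)] {p q r : ℕ}
    (h0 : Nat.card (V 0) = q + r) (h1 : Nat.card (V 1) = r + p) (h2 : Nat.card (V 2) = p + q)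
    {M : (completeMultipartiteGraph V).Subgraph} (hM : M.IsPerfectMatching) :
    (pmCount (completeMultipartiteGraph V \ M.spanningCoe) : ℤ) =
      ∑ i ∈ range (p + 1), ∑ j ∈ range (q + 1), ∑ k ∈ range (r + 1),
        (-1 : ℤ) ^ (i + j + k) * p.choose i * q.choose j * r.choose k *
          (p + q - i - j).choose (p - i) * (q + r - j - k).choose (q - j) *
          (r + p - k - i).choose (r - k) * (p - i)! * (q - j)! * (r - k)! := by
  have ha : IsEdgeProfile (Sigma.fst : (Σ x, V x) → Fin 3) ![p, q, r] := by
    have hclass (x : Fin 3) : (Sigma.fst ⁻¹' {x} : Set (Σ x, V x)).ncard = Nat.card (V x) :=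
      Nat.card_congr (Equiv.sigmaSubtype x)
    intro x
    rw [hclass, Fin.sum_univ_three]
    fin_cases x
    · change Nat.card (V 0) + p = p + q + r
      lia
    · change Nat.card (V 1) + q = p + q + r
      lia
    · change Nat.card (V 2) + r = p + q + r
      lia
  obtain ⟨g, rfl⟩ := PartnerMap.exists_toSubgraph_eq hM
  refine (ha.pmCount_sdiff_toSubgraph g).trans ?_
  rw [sum_piFinset_fin_three]
  refine sum_congr rfl fun i hi => sum_congr rfl fun j hj => sum_congr rfl fun k hk => ?_
  have hip : i ≤ p := mem_range_succ_iff.1 hi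
  have hjq : j ≤ q := mem_range_succ_iff.1 hj
  have hkr : k ≤ r := mem_range_succ_iff.1 hk
  have hij : p + q - i - j = (p - i) + (q - j) := by lia
  have hjk : q + r - j - k = (q - j) + (r - k) := by lia
  have hki : r + p - k - i = (r - k) + (p - i) := by lia
  simp only [hij, hjk, hki, tripartiteCount, Fin.prod_univ_three, Fin.sum_univ_three,
    Fin.isValue, Fin.reduceAdd, zero_add, Matrix.cons_val_zero, Matrix.cons_val_one,
    Matrix.cons_val, Pi.sub_apply, Nat.cast_mul, Int.nsmul_eq_mul]
  ring

/-- Inclusion-exclusion formula: for a fixed perfect matching `M` of `K_{2m,2m,2m}`,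
the number of perfect matchings avoiding `M` equals
`∑_{0 ≤ i,j,k ≤ m} (-1)^{i+j+k} C(m,i)C(m,j)C(m,k) C(2m-i-j,m-i)C(2m-j-k,m-j)C(2m-k-i,m-k)
(m-i)!(m-j)!(m-k)!`. -/
theorem stmt_9 (m : ℕ)
    (M : (completeMultipartiteGraph (fun _ : Fin 3 => Fin (2 * m))).Subgraph)
    (hM : M.IsPerfectMatching) :
    (pmCount (completeMultipartiteGraph (fun _ : Fin 3 => Fin (2 * m)) \
        M.spanningCoe) : ℤ) =
      ∑ i ∈ Finset.range (m + 1), ∑ j ∈ Finset.range (m + 1),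
        ∑ k ∈ Finset.range (m + 1),
          (-1 : ℤ) ^ (i + j + k) * (m.choose i) * (m.choose j) * (m.choose k) *
            ((2 * m - i - j).choose (m - i)) * ((2 * m - j - k).choose (m - j)) *
            ((2 * m - k - i).choose (m - k)) *
            (m - i)! * (m - j)! * (m - k)! := by
  simpa only [two_mul] using stmt_9_general (p := m) (q := m) (r := m) (by simp [two_mul])
    (by simp [two_mul]) (by simp [two_mul]) hM
end

section
/- For fixed r ≥ 3 and any balanced perfect matching M in K_{r×(r-1)m}, the ratio bpm(K_{r×(r-1)m} - M) / bpm(K_{r×(r-1)m}) converges to e^{-r/(2r-2)} as m → ∞. -/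
open Nat SimpleGraph Filter Topology

/-- The number of edges of a subgraph `M` of a graph on a sigma type joining
class `i` to class `j` (for `i ≠ j`, each edge counted once as an ordered pair). -/
noncomputable def crossCount {ι : Type} {β : ι → Type}
    {G : SimpleGraph (Σ i, β i)} (M : G.Subgraph) (i j : ι) : ℕ :=
  {p : (Σ i, β i) × (Σ i, β i) | p.1.1 = i ∧ p.2.1 = j ∧ M.Adj p.1 p.2}.ncard

/-- The number of balanced perfect matchings (perfect matchings with exactly `m`
edges between each pair of distinct classes) of a graph on a sigma type. -/
noncomputable def bpmCount {ι : Type} {β : ι → Type}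
    (G : SimpleGraph (Σ i, β i)) (m : ℕ) : ℕ :=
  {M : G.Subgraph | M.IsPerfectMatching ∧
    ∀ i j : ι, i ≠ j → crossCount M i j = m}.ncard

/-!
A matching is encoded as an involution, and its type records how many pairs join each two classes.
If a partial matching needs `d e` further pairs on each pair `e` of classes, it has
`(∏ i, (deg_d i)!) / ∏ e, (d e)!` completions, by induction on the number of missing pairs, summing
over the partner of a fixed free vertex. Hence `k` given pairs of `M` all lie in a uniformly random
balanced matching with probability about `(m / ((r-1)m)²) ^ k`. As `M` has `r(r-1)m/2` pairs, the
`k`-th binomial moment of the number of pairs shared with `M` tends to `x ^ k / k!` with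
`x = r / (2(r-1))`, and inclusion-exclusion with dominated convergence gives the limit
`∑ (-x) ^ k / k! = e⁻ˣ`.
-/

open Finset

section Degree

variable {ι : Type*} [Fintype ι]

/-- The degree of `i` in the multigraph on `ι` with `p e` edges on each unordered pair `e`.
A loop is counted once; this is immaterial for the loopless `p` considered here. -/
def typeDegree (p : Sym2 ι → ℕ) (i : ι) : ℕ := ∑ j, p s(i, j)

lemma typeDegree_zero (i : ι) : typeDegree (0 : Sym2 ι → ℕ) i = 0 := by simp [typeDegree]

lemma typeDegree_add (p q : Sym2 ι → ℕ) : typeDegree (p + q) = typeDegree p + typeDegree q := by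
  ext i
  simp [typeDegree, sum_add_distrib]

lemma typeDegree_mono : Monotone (typeDegree : (Sym2 ι → ℕ) → ι → ℕ) :=
  fun _ _ h _ => sum_le_sum fun _ _ => h _

lemma le_typeDegree (p : Sym2 ι → ℕ) (i j : ι) : p s(i, j) ≤ typeDegree p i :=
  single_le_sum (f := fun j => p s(i, j)) (fun _ _ => Nat.zero_le _) (mem_univ j)

variable [DecidableEq ι]

lemma typeDegree_single {a b : ι} (hab : a ≠ b) :
    typeDegree (Pi.single s(a, b) 1) = Pi.single a 1 + Pi.single b 1 := by
  ext i
  have split_pair : ∀ j, (Pi.single s(a, b) 1 : Sym2 ι → ℕ) s(i, j) =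
      (if j = b then (Pi.single a 1 : ι → ℕ) i else 0) +
        (if j = a then (Pi.single b 1 : ι → ℕ) i else 0) := by
    intro j
    simp only [Pi.single_apply, Sym2.eq_iff]
    grind
  simp [typeDegree, split_pair, sum_add_distrib]

end Degree

section Extends

variable {V : Type*} {π σ : V → V} {v w : V}

/-- The pairing `σ` contains all pairs of `π`. -/
def Extends (σ π : V → V) : Prop := ∀ u, π u ≠ u → σ u = π u

instance [Fintype V] [DecidableEq V] (π : V → V) : DecidablePred (Extends · π) :=
  fun σ => inferInstanceAs (Decidable (∀ u, π u ≠ u → σ u = π u))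

lemma extends_id : Extends σ id := fun _ h => (h rfl).elim

lemma Extends.apply_eq_self (h : Extends σ π) (hπ : Function.Involutive π)
    (hσ : Function.Involutive σ) (hv : π v = v) : π (σ v) = σ v := by
  by_contra hne
  have hback : v = π (σ v) := (hσ v).symm.trans (h _ hne)
  have hσv : σ v = v := by rw [← hπ (σ v), ← hback, hv]
  exact hne (by rw [hσv, hv])

variable [DecidableEq V]

/-- The partial matching `π` enlarged by the pair `v`, `w` of vertices unmatched by `π`. -/
def link (π : V → V) (v w : V) : V → V := Function.update (Function.update π v w) w v

lemma involutive_link (hπ : Function.Involutive π) (hv : π v = v) (hw : π w = w) :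
    Function.Involutive (link π v w) := by
  intro u
  have := hπ u
  have hne_v : π u = v → u = v := fun h => by rw [← hπ u, h, hv]
  have hne_w : π u = w → u = w := fun h => by rw [← hπ u, h, hw]
  simp only [link, Function.update_apply]
  grind

lemma extends_link_iff (hσ : Function.Involutive σ)
    (hv : π v = v) (hw : π w = w) (hvw : v ≠ w) :
    Extends σ (link π v w) ↔ Extends σ π ∧ σ v = w := by
  simp only [Extends, link, Function.update_apply]
  grind [hσ v]

end Extends

section Pairings

variable {V ι : Type*} [Fintype V] [DecidableEq V] [DecidableEq ι]

/-- `σ` is a partial matching of the vertices, encoded as an involution whose fixed points are the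
unmatched vertices, with `p s(i, j)` pairs joining colour `i` to colour `j`. The count is over
ordered pairs, so it is the number of pairs only for `i ≠ j`; a loopless `p` forbids monochromatic
pairs. -/
structure IsPairing (c : V → ι) (p : Sym2 ι → ℕ) (σ : V → V) : Prop where
  involutive : Function.Involutive σ
  card_eq : ∀ i j, #{u | σ u ≠ u ∧ c u = i ∧ c (σ u) = j} = p s(i, j)

open Classical in
/-- The finite set of all pairings of a given type. -/
noncomputable def pairings (c : V → ι) (p : Sym2 ι → ℕ) : Finset (V → V) :=
  {σ | IsPairing c p σ}

variable {c : V → ι} {p q : Sym2 ι → ℕ} {π σ : V → V} {v w : V}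

lemma mem_pairings : σ ∈ pairings c p ↔ IsPairing c p σ := by simp [pairings]

lemma isPairing_id : IsPairing c 0 id := ⟨fun _ => rfl, by simp⟩

lemma isPairing_link (hπ : IsPairing c p π) (hv : π v = v) (hw : π w = w) (hvw : c v ≠ c w) :
    IsPairing c (p + Pi.single s(c v, c w) 1) (link π v w) where
  involutive := involutive_link hπ.involutive hv hw
  card_eq i j := by
    have hne : v ≠ w := ne_of_apply_ne c hvw
    have indicator_link : ∀ u,
        (if link π v w u ≠ u ∧ c u = i ∧ c (link π v w u) = j then 1 else 0) =
        (if π u ≠ u ∧ c u = i ∧ c (π u) = j then 1 else 0) +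
        ((if u = v then (if c v = i ∧ c w = j then 1 else 0) else 0) +
          (if u = w then (if c w = i ∧ c v = j then 1 else 0) else 0)) := by
      intro u
      simp only [link, Function.update_apply]
      grind
    rw [Pi.add_apply, ← hπ.card_eq, card_filter, card_filter,
      sum_congr rfl fun u _ => indicator_link u, sum_add_distrib, sum_add_distrib]
    simp only [sum_ite_eq', mem_univ, if_true, Pi.single_apply, Sym2.eq_iff]
    grind

lemma IsPairing.le_of_extends (hσ : IsPairing c q σ) (hπ : IsPairing c p π) (h : Extends σ π) :
    p ≤ q := by
  intro e
  induction e with | _ i j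
  rw [← hπ.card_eq, ← hσ.card_eq]
  refine card_le_card fun u hu => ?_
  simp only [mem_filter, mem_univ, true_and] at hu ⊢
  rwa [h u hu.1]

section Fintype

variable [Fintype ι]

lemma IsPairing.card_fixed_add_typeDegree (hσ : IsPairing c p σ) (i : ι) :
    #{u | σ u = u ∧ c u = i} + typeDegree p i = #{u | c u = i} := by
  have hmoved : #{u | σ u ≠ u ∧ c u = i} = typeDegree p i := by
    rw [card_eq_sum_card_fiberwise (f := c ∘ σ) (t := univ) (by simp), typeDegree]
    refine sum_congr rfl fun j _ => ?_
    rw [← hσ.card_eq, filter_filter]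
    simp only [Function.comp_apply, and_assoc]
  have hsplit := card_filter_add_card_filter_not (s := {u | c u = i}) (fun u => σ u = u)
  simpa only [filter_filter, and_comm, ← hmoved] using hsplit

lemma IsPairing.apply_ne (hσ : IsPairing c p σ) (hp : ∀ i, #{u | c u = i} = typeDegree p i)
    (u : V) : σ u ≠ u := by
  have := hσ.card_fixed_add_typeDegree (c u)
  rw [hp, Nat.add_eq_right, Finset.card_eq_zero, filter_eq_empty_iff] at this
  exact fun h => this (mem_univ u) ⟨h, rfl⟩

lemma IsPairing.color_apply_ne (hσ : IsPairing c p σ)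
    (hp : ∀ i, #{u | c u = i} = typeDegree p i) (hdiag : ∀ i, p s(i, i) = 0) (u : V) :
    c (σ u) ≠ c u := by
  have := hσ.card_eq (c u) (c u)
  rw [hdiag, Finset.card_eq_zero, filter_eq_empty_iff] at this
  exact fun h => this (mem_univ u) ⟨hσ.apply_ne hp u, rfl, h⟩

end Fintype

end Pairings

section Completions

lemma exists_eq_add_single {α : Type*} [DecidableEq α] {f : α → ℕ} {a : α} (ha : 0 < f a) :
    ∃ g : α → ℕ, f = g + Pi.single a 1 := by
  refine ⟨Function.update f a (f a - 1), funext fun x => ?_⟩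
  obtain rfl | hx := eq_or_ne x a
  · simp [Nat.sub_add_cancel ha]
  · simp [hx]

lemma prod_factorial_add_single {α : Type*} [Fintype α] [DecidableEq α] (f : α → ℕ) (a : α) :
    ∏ x, ((f + Pi.single a 1 : α → ℕ) x)! = (f a + 1) * ∏ x, (f x)! := by
  have hfactor : ∀ x,
      ((f + Pi.single a 1 : α → ℕ) x)! = (if x = a then f a + 1 else 1) * (f x)! := by
    intro x
    obtain rfl | hx := eq_or_ne x a
    · simp [Nat.factorial_succ]
    · simp [hx]
  rw [prod_congr rfl fun x _ => hfactor x, prod_mul_distrib]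
  simp

variable {V ι : Type*} [Fintype V] [DecidableEq V] [DecidableEq ι]
  {c : V → ι} {p d D : Sym2 ι → ℕ} {π : V → V} {v w : V}

lemma card_extensions_of_forall_ne (hπ : IsPairing c D π) (hfix : ∀ u, π u ≠ u) :
    #{σ ∈ pairings c D | Extends σ π} = 1 := by
  refine card_eq_one.2 ⟨π, ext fun σ => ?_⟩
  simp only [mem_filter, mem_pairings, mem_singleton]
  exact ⟨fun h => funext fun u => h.2 u (hfix u), fun h => by rw [h]; exact ⟨hπ, fun _ _ => rfl⟩⟩

lemma filter_extensions_apply_eq (hv : π v = v) (hw : π w = w) (hvw : v ≠ w) :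
    {σ ∈ pairings c D | Extends σ π ∧ σ v = w} =
      {σ ∈ pairings c D | Extends σ (link π v w)} :=
  filter_congr fun _ hσ =>
    (extends_link_iff (mem_pairings.1 hσ).involutive hv hw hvw).symm

lemma card_extensions_eq_sum (hπ : IsPairing c p π) (hv : π v = v) :
    #{σ ∈ pairings c D | Extends σ π} =
      ∑ w with π w = w, #{σ ∈ pairings c D | Extends σ π ∧ σ v = w} := by
  rw [card_eq_sum_card_fiberwise (f := fun σ => σ v) (t := {w | π w = w})]
  · simp only [filter_filter]
  · intro σ hσ
    simp only [coe_filter, Set.mem_ofPred_eq, mem_univ, true_and, mem_pairings] at hσ ⊢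
    exact hσ.2.apply_eq_self hπ.involutive hσ.1.involutive hv

variable [Fintype ι]

lemma prod_factorial_typeDegree_add_single (d : Sym2 ι → ℕ) {a b : ι} (hab : a ≠ b) :
    ∏ i, (typeDegree (d + Pi.single s(a, b) 1) i)! =
      (typeDegree d a + 1) * (typeDegree d b + 1) * ∏ i, (typeDegree d i)! := by
  rw [typeDegree_add, typeDegree_single hab, ← add_assoc, prod_factorial_add_single,
    prod_factorial_add_single]
  simp only [Pi.add_apply, ne_eq, hab.symm, not_false_eq_true, Pi.single_eq_of_ne, add_zero]
  ring

lemma filter_extensions_apply_eq_empty (hπ : IsPairing c p π)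
    (hcard : ∀ i, #{u | c u = i} = typeDegree D i) (hdiag : ∀ i, D s(i, i) = 0)
    (hv : π v = v) (hw : π w = w) (hfull : p s(c v, c w) = D s(c v, c w)) :
    {σ ∈ pairings c D | Extends σ π ∧ σ v = w} = ∅ := by
  refine filter_eq_empty_iff.2 fun σ hσ h => ?_
  have hσ := mem_pairings.1 hσ
  have hcolor : c v ≠ c w := h.2 ▸ (hσ.color_apply_ne hcard hdiag v).symm
  have hext := (extends_link_iff hσ.involutive hv hw (ne_of_apply_ne c hcolor)).2 h
  have hle := hσ.le_of_extends (isPairing_link hπ hv hw hcolor) hext s(c v, c w)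
  simp [hfull] at hle

/-- The induction step: by the formula for the enlarged pairings, among the completions of `π` the
partner of `v` has a given free vertex `w` with probability
`d s(c v, c w) / (typeDegree d (c v) * typeDegree d (c w))`. -/
lemma typeDegree_mul_typeDegree_mul_card (hπ : IsPairing c p π)
    (hcard : ∀ i, #{u | c u = i} = typeDegree D i) (hdiag : ∀ i, D s(i, i) = 0) (hpd : p + d = D)
    (hv : π v = v) (hw : π w = w)
    (ih : ∀ d' : Sym2 ι → ℕ, d = d' + Pi.single s(c v, c w) 1 → c v ≠ c w →
      #{σ ∈ pairings c D | Extends σ (link π v w)} * ∏ e, (d' e)! = ∏ i, (typeDegree d' i)!) :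
    typeDegree d (c v) * typeDegree d (c w) *
        (#{σ ∈ pairings c D | Extends σ π ∧ σ v = w} * ∏ e, (d e)!) =
      d s(c v, c w) * ∏ i, (typeDegree d i)! := by
  have hadd := congrFun hpd s(c v, c w)
  rw [Pi.add_apply] at hadd
  obtain hzero | hpos := Nat.eq_zero_or_pos (d s(c v, c w))
  · rw [filter_extensions_apply_eq_empty hπ hcard hdiag hv hw (by omega)]
    simp [hzero]
  have hcolor : c v ≠ c w := fun h => by
    rw [← h, hdiag] at hadd
    rw [← h] at hpos
    omega
  obtain ⟨d', rfl⟩ := exists_eq_add_single hpos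
  rw [filter_extensions_apply_eq hv hw (ne_of_apply_ne c hcolor), prod_factorial_add_single,
    prod_factorial_typeDegree_add_single _ hcolor, ← ih d' rfl hcolor, typeDegree_add,
    typeDegree_single hcolor]
  simp only [Pi.add_apply, Pi.single_eq_same, ne_eq, hcolor, hcolor.symm, not_false_eq_true,
    Pi.single_eq_of_ne, add_zero, zero_add]
  ring

lemma sum_eq_of_card_mul_eq {α : Type*} {s : Finset α} {f : α → ℕ} {a : ℕ}
    (hf : ∀ x ∈ s, #s * f x = a) (hempty : #s = 0 → a = 0) : ∑ x ∈ s, f x = a := by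
  obtain hs | hs := Nat.eq_zero_or_pos #s
  · rw [hempty hs, Finset.card_eq_zero.1 hs, sum_empty]
  · refine Nat.eq_of_mul_eq_mul_left hs ?_
    rw [mul_sum, sum_congr rfl hf, sum_const, smul_eq_mul]

theorem IsPairing.card_extensions_mul (hπ : IsPairing c p π)
    (hcard : ∀ i, #{u | c u = i} = typeDegree D i) (hdiag : ∀ i, D s(i, i) = 0)
    (hpd : p + d = D) :
    #{σ ∈ pairings c D | Extends σ π} * ∏ e, (d e)! = ∏ i, (typeDegree d i)! := by
  induction hN : ∑ e, d e using Nat.strong_induction_on generalizing π p d with | _ N ih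
  have card_free : ∀ j, #{u | π u = u ∧ c u = j} = typeDegree d j := fun j => by
    have := hπ.card_fixed_add_typeDegree j
    rw [hcard, ← hpd, typeDegree_add, Pi.add_apply] at this
    omega
  by_cases hfree : ∃ v, π v = v
  · obtain ⟨v, hv⟩ := hfree
    have hpos : 0 < typeDegree d (c v) := card_free _ ▸ card_pos.2 ⟨v, by simp [hv]⟩
    refine Nat.eq_of_mul_eq_mul_left hpos ?_
    rw [card_extensions_eq_sum hπ hv, sum_mul, mul_sum, ← sum_fiberwise _ c]
    rw [typeDegree, sum_mul]
    refine sum_congr rfl fun j _ => sum_eq_of_card_mul_eq ?_ ?_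
    · intro w hw
      simp only [mem_filter, mem_univ, true_and] at hw
      obtain ⟨hw, rfl⟩ := hw
      rw [filter_filter, card_free, ← mul_assoc, mul_comm (typeDegree d (c w))]
      refine typeDegree_mul_typeDegree_mul_card hπ hcard hdiag hpd hv hw fun d' hd' hcolor => ?_
      refine ih (∑ e, d' e) ?_ (isPairing_link hπ hv hw hcolor) ?_ rfl
      · simp [← hN, hd', sum_add_distrib]
      · rw [← hpd, hd', add_assoc, add_comm (Pi.single _ _)]
    · intro hempty
      have := le_typeDegree d j (c v)
      rw [filter_filter, card_free] at hempty
      rw [hempty, Sym2.eq_swap, Nat.le_zero] at this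
      rw [this, zero_mul]
  · push Not at hfree
    have hd : d = 0 := by
      ext e
      induction e with | _ i j
      have := le_typeDegree d i j
      simpa [← card_free, hfree] using this
    subst hd
    simp [typeDegree_zero, card_extensions_of_forall_ne (hpd ▸ hπ : IsPairing c D π) hfree]

end Completions

section RestrictPairs

variable {V : Type*} {τ σ : V → V} {S : Finset V}

lemma exists_transversal [Finite V] (hτ : Function.Involutive τ) (hne : ∀ v, τ v ≠ v) :
    ∃ H : Finset V, ∀ v, τ v ∈ H ↔ v ∉ H := by
  classical
  have := Fintype.ofFinite V
  let _ : LinearOrder V := linearOrderOfSTO WellOrderingRel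
  refine ⟨univ.filter fun v => v < τ v, fun v => ?_⟩
  simp only [mem_filter, mem_univ, true_and, hτ v, not_lt]
  exact (hne v).le_iff_lt.symm

lemma two_mul_card_transversal [Fintype V] (hτ : Function.Involutive τ)
    (hS : ∀ v, τ v ∈ S ↔ v ∉ S) : 2 * #S = Fintype.card V := by
  classical
  have hcompl : S.map hτ.toPerm.toEmbedding = Sᶜ := by
    ext v
    simp [← hS, Finset.mem_map_equiv]
  rw [← card_add_card_compl S, ← hcompl, card_map, two_mul]

variable [DecidableEq V]

/-- The partial matching formed by the pairs of `τ` that meet `S`. -/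
def restrictPairs (τ : V → V) (S : Finset V) (u : V) : V := if u ∈ S ∨ τ u ∈ S then τ u else u

lemma restrictPairs_empty (τ : V → V) : restrictPairs τ ∅ = id := by
  ext
  simp [restrictPairs]

lemma restrictPairs_insert (hτ : Function.Involutive τ) (v : V) (S : Finset V) :
    restrictPairs τ (insert v S) = link (restrictPairs τ S) v (τ v) := by
  ext u
  have := hτ u
  simp only [restrictPairs, link, Function.update_apply, mem_insert]
  grind [hτ v]

lemma extends_restrictPairs_iff (hτ : Function.Involutive τ) (hσ : Function.Involutive σ)
    (hne : ∀ v, τ v ≠ v) : Extends σ (restrictPairs τ S) ↔ ∀ v ∈ S, σ v = τ v := by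
  refine ⟨fun h v hv => ?_, fun h u hu => ?_⟩
  · simpa [restrictPairs, hv, hne] using h v
  · simp only [restrictPairs] at hu ⊢
    split_ifs at hu ⊢ with hmem
    · obtain hu | hτu := hmem
      · exact h u hu
      · rw [← hσ (τ u), h _ hτu, hτ u]
    · exact absurd rfl hu

variable {ι : Type*} [Fintype V] [Fintype ι] [DecidableEq ι] {c : V → ι} {p D : Sym2 ι → ℕ}

lemma exists_isPairing_restrictPairs (hτ : Function.Involutive τ) (hcolor : ∀ v, c (τ v) ≠ c v)
    (hS : ∀ v ∈ S, τ v ∉ S) :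
    ∃ p, IsPairing c p (restrictPairs τ S) ∧ ∑ e, p e = #S ∧ ∑ i, typeDegree p i = 2 * #S := by
  induction S using Finset.induction_on with
  | empty => exact ⟨0, restrictPairs_empty τ ▸ isPairing_id, by simp, by simp [typeDegree_zero]⟩
  | insert v S hv ih =>
    obtain ⟨p, hp, hsum, hdeg⟩ := ih fun u hu h => hS u (mem_insert_of_mem hu) (mem_insert_of_mem h)
    have hτv : τ v ∉ S := fun h => hS v (mem_insert_self v S) (mem_insert_of_mem h)
    refine ⟨p + Pi.single s(c v, c (τ v)) 1, ?_, ?_, ?_⟩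
    · rw [restrictPairs_insert hτ]
      exact isPairing_link hp (by simp [restrictPairs, hv, hτv])
        (by simp [restrictPairs, hv, hτv, hτ v]) (hcolor v).symm
    · simp [sum_add_distrib, hsum, card_insert_of_notMem hv]
    · rw [typeDegree_add, typeDegree_single (hcolor v).symm, card_insert_of_notMem hv]
      simp only [Pi.add_apply, sum_add_distrib, hdeg, sum_pi_single', mem_univ, if_true]
      ring

lemma card_pairings_mul (hcard : ∀ i, #{u | c u = i} = typeDegree D i)
    (hdiag : ∀ i, D s(i, i) = 0) :
    #(pairings c D) * ∏ e, (D e)! = ∏ i, (typeDegree D i)! := by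
  simpa [extends_id] using isPairing_id.card_extensions_mul hcard hdiag (zero_add D)

theorem card_agreeing_mul (hτ : IsPairing c D τ) (hcard : ∀ i, #{u | c u = i} = typeDegree D i)
    (hdiag : ∀ i, D s(i, i) = 0) (hS : ∀ v ∈ S, τ v ∉ S) :
    ∃ p ≤ D, ∑ e, p e = #S ∧ ∑ i, typeDegree p i = 2 * #S ∧
      #{σ ∈ pairings c D | ∀ v ∈ S, σ v = τ v} *
          ∏ i, (typeDegree D i).descFactorial (typeDegree p i) =
        #(pairings c D) * ∏ e, (D e).descFactorial (p e) := by
  have hne := hτ.apply_ne hcard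
  obtain ⟨p, hp, hsum, hdeg⟩ :=
    exists_isPairing_restrictPairs hτ.involutive (hτ.color_apply_ne hcard hdiag) hS
  have hle : p ≤ D := hτ.le_of_extends hp <|
    (extends_restrictPairs_iff hτ.involutive hτ.involutive hne).2 fun _ _ => rfl
  obtain ⟨d, rfl⟩ := le_iff_exists_add.1 hle
  refine ⟨p, hle, hsum, hdeg, ?_⟩
  have hrestrict := hp.card_extensions_mul hcard hdiag rfl
  rw [filter_congr fun σ hσ => extends_restrictPairs_iff hτ.involutive
    (mem_pairings.1 hσ).involutive hne] at hrestrict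
  have hall := card_pairings_mul hcard hdiag
  have split_factorial : ∀ a b : ℕ, (a + b)! = b ! * (a + b).descFactorial a := fun a b => by
    simpa using (Nat.factorial_mul_descFactorial (Nat.le_add_right a b)).symm
  simp only [typeDegree_add, Pi.add_apply, split_factorial, prod_mul_distrib] at hall ⊢
  refine Nat.eq_of_mul_eq_mul_left (prod_pos fun e (_ : e ∈ univ) => (d e).factorial_pos) ?_
  linear_combination (∏ i, (typeDegree p i + typeDegree d i).descFactorial (typeDegree p i)) *
    hrestrict - hall

end RestrictPairs

section InclusionExclusion

lemma card_filter_forall_not {α β : Type*} (A : Finset α) (H : Finset β)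
    (P : β → α → Prop) [DecidablePred fun a => ∀ b ∈ H, ¬P b a]
    [∀ S : Finset β, DecidablePred fun a => ∀ b ∈ S, P b a] :
    (#{a ∈ A | ∀ b ∈ H, ¬P b a} : ℤ) =
      ∑ k ∈ range (#H + 1), (-1) ^ k * ∑ S ∈ H.powersetCard k, (#{a ∈ A | ∀ b ∈ S, P b a} : ℤ) := by
  classical
  have sum_subsets : ∀ a, ∑ S ∈ H.powerset, (if ∀ b ∈ S, P b a then (-1 : ℤ) ^ #S else 0) =
      if ∀ b ∈ H, ¬P b a then 1 else 0 := by
    intro a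
    have hfilter : {S ∈ H.powerset | ∀ b ∈ S, P b a} = {b ∈ H | P b a}.powerset := by
      ext S
      simp only [mem_filter, mem_powerset, subset_iff]
      grind
    rw [← sum_filter, hfilter, sum_powerset_neg_one_pow_card]
    simp only [filter_eq_empty_iff]
  calc (#{a ∈ A | ∀ b ∈ H, ¬P b a} : ℤ)
      = ∑ S ∈ H.powerset, (-1) ^ #S * (#{a ∈ A | ∀ b ∈ S, P b a} : ℤ) := by
        simp_rw [card_filter, Nat.cast_sum, Nat.cast_ite, Nat.cast_one, Nat.cast_zero,
          ← sum_subsets, mul_sum, mul_ite, mul_one, mul_zero]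
        exact sum_comm
    _ = _ := by
        rw [sum_powerset]
        refine sum_congr rfl fun k _ => ?_
        rw [mul_sum]
        exact sum_congr rfl fun S hS => by rw [(mem_powersetCard.1 hS).2]

end InclusionExclusion

section DescFactorial

lemma descFactorial_sum_le_prod {α : Type*} (s : Finset α) (q : α → ℕ) (n : ℕ) :
    n.descFactorial (∑ i ∈ s, q i) ≤ ∏ i ∈ s, n.descFactorial (q i) := by
  classical
  induction s using Finset.induction_on with
  | empty => simp
  | insert a s ha ih =>
    rw [sum_insert ha, prod_insert ha,
      ← Nat.descFactorial_mul_descFactorial (Nat.le_add_right (q a) _), Nat.add_sub_cancel_left,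
      mul_comm]
    exact Nat.mul_le_mul_left _ ((Nat.descFactorial_le _ (Nat.sub_le n _)).trans ih)

lemma prod_descFactorial_le_pow {α : Type*} (s : Finset α) (q : α → ℕ) (n : ℕ) :
    ∏ i ∈ s, n.descFactorial (q i) ≤ n ^ ∑ i ∈ s, q i :=
  (prod_le_prod' fun _ _ => Nat.descFactorial_le_pow _ _).trans_eq (prod_pow_eq_pow_sum s q n)

lemma pow_mul_factorial_le_pow_mul_descFactorial {n k : ℕ} (hk : k ≤ n) :
    n ^ k * k ! ≤ k ^ k * n.descFactorial k := by
  rw [← Nat.descFactorial_self, Nat.descFactorial_eq_prod_range, Nat.descFactorial_eq_prod_range,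
    ← card_range k, ← prod_const, ← prod_const, card_range, ← prod_mul_distrib, ← prod_mul_distrib]
  refine prod_le_prod' fun j _ => ?_
  rw [Nat.mul_sub, Nat.mul_sub, mul_comm n k]
  exact Nat.sub_le_sub_left (Nat.mul_le_mul_right j hk) _

lemma pow_le_exp_pow_mul_descFactorial {n k : ℕ} (hk : k ≤ n) :
    (n : ℝ) ^ k ≤ Real.exp 1 ^ k * n.descFactorial k := by
  have hfactorial : (0 : ℝ) < k ! := by positivity
  refine le_of_mul_le_mul_right ?_ hfactorial
  calc (n : ℝ) ^ k * k ! ≤ (k : ℝ) ^ k * n.descFactorial k := by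
        exact_mod_cast pow_mul_factorial_le_pow_mul_descFactorial hk
    _ ≤ Real.exp k * k ! * n.descFactorial k := by
        gcongr
        exact (div_le_iff₀ hfactorial).1 (Real.pow_div_factorial_le_exp k k.cast_nonneg k)
    _ = _ := by
        rw [← Real.exp_one_pow]
        ring

lemma pow_sum_le_exp_pow_mul_prod_descFactorial {α : Type*} {s : Finset α} {q : α → ℕ} {n : ℕ}
    (hq : ∀ i ∈ s, q i ≤ n) :
    (n : ℝ) ^ ∑ i ∈ s, q i ≤
      Real.exp 1 ^ (∑ i ∈ s, q i) * ∏ i ∈ s, (n.descFactorial (q i) : ℝ) := by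
  rw [← prod_pow_eq_pow_sum, ← prod_pow_eq_pow_sum, ← prod_mul_distrib]
  exact prod_le_prod (fun _ _ => by positivity) fun i hi =>
    pow_le_exp_pow_mul_descFactorial (hq i hi)

lemma tendsto_descFactorial_div_pow {a : ℕ → ℕ} {L : ℝ} (hL : 0 < L) (ha : ∀ m, (a m : ℝ) = L * m)
    (k : ℕ) :
    Tendsto (fun m => ((a m).descFactorial k : ℝ) / m ^ k) atTop (𝓝 (L ^ k)) := by
  have ha_top : Tendsto a atTop atTop := by
    rw [← tendsto_natCast_atTop_iff (R := ℝ), funext ha]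
    exact tendsto_natCast_atTop_atTop.const_mul_atTop hL
  have hequiv := ((isEquivalent_descFactorial k).comp_tendsto ha_top).div
    (Asymptotics.IsEquivalent.refl (u := fun m : ℕ => (m : ℝ) ^ k))
  refine hequiv.symm.tendsto_nhds (tendsto_const_nhds.congr' ?_)
  filter_upwards [eventually_gt_atTop 0] with m hm
  simp [ha, mul_pow, hm.ne']

end DescFactorial

section AlternatingSum

lemma tendsto_alternating_sum {B : ℕ → ℕ → ℝ} {h : ℕ → ℕ} {x C : ℝ}
    (hlim : ∀ k, Tendsto (B · k) atTop (𝓝 (x ^ k / k !)))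
    (hbound : ∀ᶠ m in atTop, ∀ k, |B m k| ≤ C ^ k / k !) (hzero : ∀ m k, h m < k → B m k = 0) :
    Tendsto (fun m => ∑ k ∈ range (h m + 1), (-1) ^ k * B m k) atTop (𝓝 (Real.exp (-x))) := by
  have hsum : ∀ m, ∑ k ∈ range (h m + 1), (-1) ^ k * B m k = ∑' k, (-1) ^ k * B m k := fun m =>
    (tsum_eq_sum fun k hk => by rw [hzero m k (by simpa using hk), mul_zero]).symm
  simp_rw [hsum, Real.exp_eq_exp_ℝ, NormedSpace.exp_eq_tsum_div]
  refine tendsto_tsum_of_dominated_convergence (Real.summable_pow_div_factorial C) (fun k => ?_) ?_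
  · rw [neg_pow x, mul_div_assoc]
    exact (hlim k).const_mul _
  · simpa using hbound

end AlternatingSum

section BinomialMoment

variable {V ι : Type*} [Fintype V] [DecidableEq V] [DecidableEq ι]
  {c : V → ι} {D : Sym2 ι → ℕ} {τ : V → V} {H : Finset V}

/-- The `k`-th binomial moment of the number of vertices `v ∈ H` with `σ v = τ v`, for a uniformly
random pairing `σ` of type `D`. -/
noncomputable def binomialMoment (c : V → ι) (D : Sym2 ι → ℕ) (τ : V → V) (H : Finset V) (k : ℕ) :
    ℝ :=
  (∑ S ∈ H.powersetCard k, (#{σ ∈ pairings c D | ∀ v ∈ S, σ v = τ v} : ℝ)) / #(pairings c D)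

lemma binomialMoment_nonneg (k : ℕ) : 0 ≤ binomialMoment c D τ H k := by
  unfold binomialMoment
  positivity

lemma binomialMoment_eq_zero {k : ℕ} (hk : #H < k) : binomialMoment c D τ H k = 0 := by
  simp [binomialMoment, powersetCard_eq_empty.2 hk]

lemma card_avoiding_div (hτ : Function.Involutive τ) (hH : ∀ v, τ v ∈ H ↔ v ∉ H) :
    (#{σ ∈ pairings c D | ∀ u, σ u ≠ τ u} : ℝ) / #(pairings c D) =
      ∑ k ∈ range (#H + 1), (-1) ^ k * binomialMoment c D τ H k := by
  have avoids_iff : ∀ σ ∈ pairings c D, (∀ u, σ u ≠ τ u) ↔ ∀ v ∈ H, ¬σ v = τ v := by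
    refine fun σ hσ => ⟨fun h v _ => h v, fun h u hu => ?_⟩
    by_cases huH : u ∈ H
    · exact h u huH hu
    · exact h (τ u) ((hH u).2 huH) (by rw [← hu, (mem_pairings.1 hσ).involutive, hu, hτ])
  have hcount := card_filter_forall_not (pairings c D) H (fun v σ => σ v = τ v)
  rw [← filter_congr avoids_iff] at hcount
  rw [← Int.cast_natCast, hcount]
  push_cast
  simp_rw [sum_div, mul_div_assoc, binomialMoment]

lemma le_binomialMoment_mul (hD : (pairings c D).Nonempty) {k : ℕ} {a b : ℝ}
    (h : ∀ S ∈ H.powersetCard k,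
      b * #(pairings c D) ≤ #{σ ∈ pairings c D | ∀ v ∈ S, σ v = τ v} * a) :
    (#H).choose k * b ≤ binomialMoment c D τ H k * a := by
  have hpos : (0 : ℝ) < #(pairings c D) := by exact_mod_cast hD.card_pos
  rw [binomialMoment, div_mul_eq_mul_div, le_div_iff₀ hpos, mul_assoc, sum_mul,
    ← card_powersetCard, ← nsmul_eq_mul]
  exact card_nsmul_le_sum _ _ _ h

lemma binomialMoment_mul_le (hD : (pairings c D).Nonempty) {k : ℕ} {a b : ℝ}
    (h : ∀ S ∈ H.powersetCard k,
      #{σ ∈ pairings c D | ∀ v ∈ S, σ v = τ v} * a ≤ b * #(pairings c D)) :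
    binomialMoment c D τ H k * a ≤ (#H).choose k * b := by
  have hpos : (0 : ℝ) < #(pairings c D) := by exact_mod_cast hD.card_pos
  rw [binomialMoment, div_mul_eq_mul_div, div_le_iff₀ hpos, mul_assoc, sum_mul,
    ← card_powersetCard, ← nsmul_eq_mul]
  exact sum_le_card_nsmul _ _ _ h

end BinomialMoment

section Balanced

variable {ι : Type*} [DecidableEq ι]

/-- The type of the balanced pairings: `m` pairs between any two distinct colours. -/
def balancedType (ι : Type*) [DecidableEq ι] (m : ℕ) (e : Sym2 ι) : ℕ := if e.IsDiag then 0 else m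

lemma balancedType_diag (m : ℕ) (i : ι) : balancedType ι m s(i, i) = 0 := by simp [balancedType]

lemma descFactorial_balancedType {m : ℕ} {p : Sym2 ι → ℕ} (hp : p ≤ balancedType ι m) (e : Sym2 ι) :
    (balancedType ι m e).descFactorial (p e) = m.descFactorial (p e) := by
  have := hp e
  unfold balancedType at this ⊢
  split_ifs at this ⊢
  · simp [Nat.le_zero.1 this]
  · rfl

variable [Fintype ι]

lemma typeDegree_balancedType (m : ℕ) (i : ι) :
    typeDegree (balancedType ι m) i = (Fintype.card ι - 1) * m := by
  simp [typeDegree, balancedType, sum_ite, filter_ne, card_erase_of_mem]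

variable {V : Type*} [Fintype V] [DecidableEq V] {c : V → ι} {τ : V → V} {H S : Finset V}
  {m n : ℕ}

lemma card_agreeing_balanced_mul (hτ : IsPairing c (balancedType ι m) τ)
    (hcard : ∀ i, #{u | c u = i} = n) (hn : n = (Fintype.card ι - 1) * m)
    (hS : ∀ v ∈ S, τ v ∉ S) :
    ∃ p : Sym2 ι → ℕ, (∀ i, typeDegree p i ≤ n) ∧ ∑ e, p e = #S ∧ ∑ i, typeDegree p i = 2 * #S ∧
      #{σ ∈ pairings c (balancedType ι m) | ∀ v ∈ S, σ v = τ v} *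
          ∏ i, n.descFactorial (typeDegree p i) =
        #(pairings c (balancedType ι m)) * ∏ e, m.descFactorial (p e) := by
  have degree_eq : ∀ i, typeDegree (balancedType ι m) i = n := fun i => by
    rw [typeDegree_balancedType, hn]
  obtain ⟨p, hp, hsum, hdeg, hmul⟩ :=
    card_agreeing_mul hτ (fun i => by rw [hcard, degree_eq]) (balancedType_diag m) hS
  simp only [degree_eq, descFactorial_balancedType hp] at hmul
  exact ⟨p, fun i => (typeDegree_mono hp i).trans_eq (degree_eq i), hsum, hdeg, hmul⟩

lemma card_agreeing_bounds (hτ : IsPairing c (balancedType ι m) τ)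
    (hcard : ∀ i, #{u | c u = i} = n) (hn : n = (Fintype.card ι - 1) * m)
    (hS : ∀ v ∈ S, τ v ∉ S) :
    let A : ℝ := #{σ ∈ pairings c (balancedType ι m) | ∀ v ∈ S, σ v = τ v}
    let N : ℝ := #(pairings c (balancedType ι m))
    m.descFactorial #S * N ≤ A * n ^ (2 * #S) ∧
      A * n.descFactorial (2 * #S) ≤ m ^ #S * N ∧
      A * n ^ (2 * #S) ≤ Real.exp 1 ^ (2 * #S) * m ^ #S * N := by
  intro A N
  obtain ⟨p, hle, hsum, hdeg, hmul⟩ := card_agreeing_balanced_mul hτ hcard hn hS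
  have hmul : A * ∏ i, (n.descFactorial (typeDegree p i) : ℝ) =
      N * ∏ e, (m.descFactorial (p e) : ℝ) := by
    simp only [A, N]
    exact_mod_cast hmul
  have hlow_m : (m.descFactorial #S : ℝ) ≤ ∏ e, (m.descFactorial (p e) : ℝ) := by
    rw [← hsum]
    exact_mod_cast descFactorial_sum_le_prod univ p m
  have hupp_m : ∏ e, (m.descFactorial (p e) : ℝ) ≤ m ^ #S := by
    rw [← hsum]
    exact_mod_cast prod_descFactorial_le_pow univ p m
  have hlow_n : (n.descFactorial (2 * #S) : ℝ) ≤ ∏ i, (n.descFactorial (typeDegree p i) : ℝ) := by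
    rw [← hdeg]
    exact_mod_cast descFactorial_sum_le_prod univ (typeDegree p) n
  have hupp_n : ∏ i, (n.descFactorial (typeDegree p i) : ℝ) ≤ n ^ (2 * #S) := by
    rw [← hdeg]
    exact_mod_cast prod_descFactorial_le_pow univ (typeDegree p) n
  have hexp_n := pow_sum_le_exp_pow_mul_prod_descFactorial fun i (_ : i ∈ univ) => hle i
  rw [hdeg] at hexp_n
  refine ⟨?_, ?_, ?_⟩
  · calc m.descFactorial #S * N ≤ (∏ e, (m.descFactorial (p e) : ℝ)) * N := by gcongr
      _ = A * ∏ i, (n.descFactorial (typeDegree p i) : ℝ) := by rw [hmul, mul_comm]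
      _ ≤ A * n ^ (2 * #S) := by gcongr
  · calc A * n.descFactorial (2 * #S) ≤ A * ∏ i, (n.descFactorial (typeDegree p i) : ℝ) := by gcongr
      _ = (∏ e, (m.descFactorial (p e) : ℝ)) * N := by rw [hmul, mul_comm]
      _ ≤ m ^ #S * N := by gcongr
  · calc A * n ^ (2 * #S)
        ≤ A * (Real.exp 1 ^ (2 * #S) * ∏ i, (n.descFactorial (typeDegree p i) : ℝ)) := by gcongr
      _ = Real.exp 1 ^ (2 * #S) * (∏ e, (m.descFactorial (p e) : ℝ)) * N := by
        rw [mul_left_comm, hmul]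
        ring
      _ ≤ Real.exp 1 ^ (2 * #S) * m ^ #S * N := by gcongr

theorem binomialMoment_bounds (hτ : IsPairing c (balancedType ι m) τ)
    (hcard : ∀ i, #{u | c u = i} = n) (hn : n = (Fintype.card ι - 1) * m)
    (hH : ∀ v, τ v ∈ H ↔ v ∉ H) (k : ℕ) :
    let B := binomialMoment c (balancedType ι m) τ H k
    (#H).choose k * m.descFactorial k ≤ B * n ^ (2 * k) ∧
      B * n.descFactorial (2 * k) ≤ (#H).choose k * m ^ k ∧
      B * n ^ (2 * k) ≤ (#H).choose k * (Real.exp 1 ^ (2 * k) * m ^ k) := by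
  have hne : (pairings c (balancedType ι m)).Nonempty := ⟨τ, mem_pairings.2 hτ⟩
  have bounds : ∀ S ∈ H.powersetCard k, #S = k ∧ _ := fun S hS =>
    ⟨(mem_powersetCard.1 hS).2, card_agreeing_bounds (S := S) hτ hcard hn fun v hv hτv =>
      (hH v).1 ((mem_powersetCard.1 hS).1 hτv) ((mem_powersetCard.1 hS).1 hv)⟩
  refine ⟨le_binomialMoment_mul hne fun S hS => ?_, binomialMoment_mul_le hne fun S hS => ?_,
    binomialMoment_mul_le hne fun S hS => ?_⟩ <;> obtain ⟨rfl, hlow, hupp, hexp⟩ := bounds S hS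
  · exact hlow
  · exact hupp
  · exact hexp

end Balanced

section Asymptotics

variable {B : ℕ → ℝ} {h n : ℕ → ℕ} {L s : ℝ} {k : ℕ}

lemma tendsto_of_moment_bounds (hL : 0 < L) (hs : 0 < s) (hh : ∀ m, (h m : ℝ) = L * m)
    (hn : ∀ m, (n m : ℝ) = s * m)
    (hlow : ∀ m, ((h m).choose k * m.descFactorial k : ℝ) ≤ B m * n m ^ (2 * k))
    (hupp : ∀ m, B m * (n m).descFactorial (2 * k) ≤ (h m).choose k * m ^ k) :
    Tendsto B atTop (𝓝 ((L / s ^ 2) ^ k / k !)) := by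
  have hlim_h := tendsto_descFactorial_div_pow hL hh k
  have hlim_m := tendsto_descFactorial_div_pow (a := id) one_pos (by simp) k
  have hlim_n := tendsto_descFactorial_div_pow hs hn (2 * k)
  have hchoose : ∀ m, ((h m).descFactorial k : ℝ) = k ! * (h m).choose k := fun m => by
    rw [Nat.descFactorial_eq_factorial_mul_choose, Nat.cast_mul]
  have hlim : (L / s ^ 2) ^ k / k ! = L ^ k * 1 ^ k / s ^ (2 * k) / k ! := by
    rw [one_pow, mul_one, div_pow, pow_mul]
  refine tendsto_of_tendsto_of_tendsto_of_le_of_le'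
    (g := fun m => (h m).descFactorial k / m ^ k * ((m.descFactorial k : ℝ) / m ^ k) /
      s ^ (2 * k) / k !)
    (h := fun m => (h m).descFactorial k / m ^ k * 1 ^ k /
      ((n m).descFactorial (2 * k) / m ^ (2 * k)) / k !) ?_ ?_ ?_ ?_
  · rw [hlim]
    exact ((hlim_h.mul hlim_m).div_const _).div_const _
  · rw [hlim]
    exact ((hlim_h.mul_const _).div hlim_n (by positivity)).div_const _
  · filter_upwards [eventually_gt_atTop 0] with m hm
    calc _ = ((h m).choose k * m.descFactorial k : ℝ) / (s * m) ^ (2 * k) := by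
          rw [hchoose, mul_pow, two_mul, pow_add (m : ℝ)]
          field_simp
      _ ≤ B m := (div_le_iff₀ (by positivity)).2 (hn m ▸ hlow m)
  · filter_upwards [eventually_gt_atTop 0, hlim_n.eventually_const_lt (by positivity)]
      with m hm hpos
    have hpos : (0 : ℝ) < (n m).descFactorial (2 * k) := by
      by_contra! h
      have : ((n m).descFactorial (2 * k) : ℝ) = 0 := le_antisymm h (by positivity)
      simp [this] at hpos
    calc B m ≤ (h m).choose k * m ^ k / (n m).descFactorial (2 * k) :=
          (le_div_iff₀ hpos).2 (hupp m)
      _ = _ := by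
          rw [hchoose, one_pow, two_mul, pow_add (m : ℝ)]
          field_simp

lemma abs_le_of_moment_bound {b : ℝ} {h n m : ℕ} (hb : 0 ≤ b) (hs : 0 < s) (hm : 0 < m)
    (hh : (h : ℝ) = L * m) (hn : (n : ℝ) = s * m)
    (hexp : b * n ^ (2 * k) ≤ h.choose k * (Real.exp 1 ^ (2 * k) * m ^ k)) :
    |b| ≤ (L * Real.exp 1 ^ 2 / s ^ 2) ^ k / k ! := by
  rw [abs_of_nonneg hb]
  calc b ≤ h.choose k * (Real.exp 1 ^ (2 * k) * m ^ k) / n ^ (2 * k) :=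
        (le_div_iff₀ (by rw [hn]; positivity)).2 hexp
    _ ≤ (L * m) ^ k / k ! * (Real.exp 1 ^ (2 * k) * m ^ k) / (s * m) ^ (2 * k) := by
        rw [hn]
        gcongr
        exact hh ▸ Nat.choose_le_pow_div k h
    _ = _ := by
        simp only [div_pow, mul_pow, ← pow_mul]
        field_simp
        ring

end Asymptotics

section Limit

theorem tendsto_card_avoiding_div {ι : Type*} [Fintype ι] [DecidableEq ι] [Nontrivial ι]
    {V : ℕ → Type*} [∀ m, Fintype (V m)] [∀ m, DecidableEq (V m)]
    {c : ∀ m, V m → ι} {τ : ∀ m, V m → V m}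
    (hcard : ∀ m i, #{u | c m u = i} = (Fintype.card ι - 1) * m)
    (hτ : ∀ m, IsPairing (c m) (balancedType ι m) (τ m)) :
    Tendsto
      (fun m => (#{σ ∈ pairings (c m) (balancedType ι m) | ∀ u, σ u ≠ τ m u} : ℝ) /
        #(pairings (c m) (balancedType ι m)))
      atTop (𝓝 (Real.exp (-(Fintype.card ι / (2 * (Fintype.card ι - 1)))))) := by
  set r := Fintype.card ι
  have hr : 1 < r := Fintype.one_lt_card
  set s : ℝ := r - 1
  have hs : 0 < s := sub_pos.2 (by exact_mod_cast hr)
  have hn : ∀ m : ℕ, (((r - 1) * m : ℕ) : ℝ) = s * m := fun m => by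
    rw [Nat.cast_mul, Nat.cast_pred (by omega)]
  choose H hH using fun m => exists_transversal (hτ m).involutive <|
    (hτ m).apply_ne fun i => by rw [hcard, typeDegree_balancedType]
  have hh : ∀ m, (#(H m) : ℝ) = r * s / 2 * m := fun m => by
    have htransversal := two_mul_card_transversal (hτ m).involutive (hH m)
    have hclasses : Fintype.card (V m) = r * ((r - 1) * m) := by
      rw [← Finset.card_univ, card_eq_sum_card_fiberwise (f := c m) (t := univ) (by simp)]
      simp [hcard, r]
    have : (2 : ℝ) * #(H m) = r * (s * m) := by
      rw [← hn]
      exact_mod_cast htransversal.trans hclasses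
    linear_combination this / 2
  have bounds m := binomialMoment_bounds (hτ m) (hcard m) rfl (hH m)
  have hlimit : (r : ℝ) / (2 * s) = r * s / 2 / s ^ 2 := by field_simp
  simp_rw [card_avoiding_div (hτ _).involutive (hH _), hlimit]
  refine tendsto_alternating_sum (C := r * s / 2 * Real.exp 1 ^ 2 / s ^ 2) (fun k => ?_) ?_
    fun m k hk => binomialMoment_eq_zero hk
  · exact tendsto_of_moment_bounds (by positivity) hs hh hn (fun m => (bounds m k).1)
      fun m => (bounds m k).2.1
  · filter_upwards [eventually_gt_atTop 0] with m hm k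
    exact abs_le_of_moment_bound (binomialMoment_nonneg k) hs hm (hh m) (hn m) (bounds m k).2.2

end Limit

section PerfectMatchings

section

variable {V : Type*} {G : SimpleGraph V} {σ : V → V}

/-- The pairs of an involution `σ` that are edges of `G`, as a spanning subgraph of `G`. -/
def pairingSubgraph (G : SimpleGraph V) (σ : V → V) : G.Subgraph where
  verts := Set.univ
  Adj u v := G.Adj u v ∧ σ u = v ∧ σ v = u
  adj_sub h := h.1
  edge_vert _ := Set.mem_univ _
  symm := ⟨fun _ _ h => ⟨h.1.symm, h.2.symm⟩⟩

lemma pairingSubgraph_adj_iff (hσ : Function.Involutive σ) (hG : ∀ u, G.Adj u (σ u)) (u v : V) :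
    (pairingSubgraph G σ).Adj u v ↔ σ u = v := by
  refine ⟨fun h => h.2.1, ?_⟩
  rintro rfl
  exact ⟨hG u, rfl, hσ u⟩

lemma isPerfectMatching_iff_exists_adj_iff {M : G.Subgraph} :
    M.IsPerfectMatching ↔ ∃ σ : V → V, ∀ u v, M.Adj u v ↔ σ u = v := by
  rw [Subgraph.isPerfectMatching_iff]
  refine ⟨fun h => ?_, fun ⟨σ, hσ⟩ u => ⟨σ u, (hσ _ _).2 rfl, fun v h => ((hσ u v).1 h).symm⟩⟩
  choose σ hσ huniq using h
  exact ⟨σ, fun u v => ⟨fun h => (huniq u v h).symm, fun h => h ▸ hσ u⟩⟩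

lemma eq_pairingSubgraph {M : G.Subgraph} (hσ : ∀ u v, M.Adj u v ↔ σ u = v) :
    M = pairingSubgraph G σ := by
  refine Subgraph.ext (Set.eq_univ_of_forall fun u => M.edge_vert ((hσ u _).2 rfl)) ?_
  ext u v
  exact ⟨fun h => ⟨h.adj_sub, (hσ _ _).1 h, (hσ _ _).1 h.symm⟩, fun h => (hσ _ _).2 h.2.1⟩

end

variable {ι : Type} {β : ι → Type} [Fintype (Σ i, β i)] [DecidableEq ι]
  {G : SimpleGraph (Σ i, β i)} {M : G.Subgraph} {σ : (Σ i, β i) → Σ i, β i} {m : ℕ}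

lemma crossCount_eq_card (hσ : ∀ u v, M.Adj u v ↔ σ u = v) (i j : ι) :
    crossCount M i j = #{u | u.1 = i ∧ (σ u).1 = j} := by
  have hgraph : {p : (Σ i, β i) × (Σ i, β i) | p.1.1 = i ∧ p.2.1 = j ∧ M.Adj p.1 p.2} =
      (fun u => (u, σ u)) '' {u | u.1 = i ∧ (σ u).1 = j} := by
    ext ⟨u, v⟩
    simp only [Set.mem_ofPred_eq, hσ, Set.mem_image, Prod.mk.injEq]
    grind
  rw [crossCount, hgraph, Set.ncard_image_of_injective _ fun _ _ h => (Prod.ext_iff.1 h).1,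
    ← Set.ncard_coe_finset]
  simp

variable [DecidableEq (Σ i, β i)]

lemma isPairing_iff_crossCount_eq (hG : G ≤ completeMultipartiteGraph β)
    (hσ : ∀ u v, M.Adj u v ↔ σ u = v) :
    IsPairing Sigma.fst (balancedType ι m) σ ↔ ∀ i j, i ≠ j → crossCount M i j = m := by
  have color_ne : ∀ u, u.1 ≠ (σ u).1 := fun u => hG ((hσ u _).2 rfl).adj_sub
  have count_eq : ∀ i j, #{u | σ u ≠ u ∧ u.1 = i ∧ (σ u).1 = j} = crossCount M i j := fun i j => by
    rw [crossCount_eq_card hσ]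
    refine congrArg card (filter_congr fun u _ => and_iff_right fun h => color_ne u ?_)
    rw [h]
  refine ⟨fun h i j hij => ?_, fun h => ⟨fun u => ?_, fun i j => ?_⟩⟩
  · rw [← count_eq, h.card_eq]
    simp [balancedType, hij]
  · exact (hσ _ _).1 ((hσ u _).2 rfl).symm
  · rw [count_eq]
    obtain rfl | hij := eq_or_ne i j
    · rw [crossCount_eq_card hσ, balancedType_diag, Finset.card_eq_zero, filter_eq_empty_iff]
      exact fun u _ h => color_ne u (h.1.trans h.2.symm)
    · simp [h i j hij, balancedType, hij]

theorem bpmCount_eq_card [DecidableRel G.Adj] (hG : G ≤ completeMultipartiteGraph β) :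
    bpmCount G m = #{σ ∈ pairings Sigma.fst (balancedType ι m) | ∀ u, G.Adj u (σ u)} := by
  have balanced_eq_image : {M : G.Subgraph | M.IsPerfectMatching ∧
      ∀ i j : ι, i ≠ j → crossCount M i j = m} =
      pairingSubgraph G '' {σ | IsPairing Sigma.fst (balancedType ι m) σ ∧ ∀ u, G.Adj u (σ u)} := by
    ext M
    constructor
    · rintro ⟨hM, hbal⟩
      obtain ⟨σ, hσ⟩ := isPerfectMatching_iff_exists_adj_iff.1 hM
      exact ⟨σ, ⟨(isPairing_iff_crossCount_eq hG hσ).2 hbal,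
        fun u => ((hσ u _).2 rfl).adj_sub⟩, (eq_pairingSubgraph hσ).symm⟩
    · rintro ⟨σ, ⟨hσ, hadj⟩, rfl⟩
      have hM := pairingSubgraph_adj_iff hσ.involutive hadj
      exact ⟨isPerfectMatching_iff_exists_adj_iff.2 ⟨σ, hM⟩,
        (isPairing_iff_crossCount_eq hG hM).1 hσ⟩
  have hinj : Set.InjOn (pairingSubgraph G)
      {σ | IsPairing Sigma.fst (balancedType ι m) σ ∧ ∀ u, G.Adj u (σ u)} := by
    rintro σ ⟨hσ, hadj⟩ σ' - heq
    ext1 u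
    have := (pairingSubgraph_adj_iff hσ.involutive hadj u _).2 rfl
    rw [heq] at this
    exact this.2.1.symm
  rw [bpmCount, balanced_eq_image, hinj.ncard_image]
  rw [← Set.ncard_coe_finset]
  simp [mem_pairings]

end PerfectMatchings

lemma card_filter_fst_eq {ι : Type*} [Fintype ι] [DecidableEq ι] {β : ι → Type*}
    [∀ i, Fintype (β i)] (i : ι) : #{u : Σ i, β i | u.1 = i} = Fintype.card (β i) := by
  rw [← Fintype.card_subtype]
  exact Fintype.card_congr (Equiv.sigmaSubtype i)

theorem stmt_13_general {ι : Type} [Fintype ι] [Nontrivial ι] {β : ℕ → ι → Type}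
    [∀ m i, Fintype (β m i)] (hβ : ∀ m i, Fintype.card (β m i) = (Fintype.card ι - 1) * m)
    (M : ∀ m, (completeMultipartiteGraph (β m)).Subgraph) (hM : ∀ m, (M m).IsPerfectMatching)
    (hbal : ∀ m, ∀ i j, i ≠ j → crossCount (M m) i j = m) :
    Tendsto
      (fun m => (bpmCount (completeMultipartiteGraph (β m) \ (M m).spanningCoe) m : ℝ) /
        bpmCount (completeMultipartiteGraph (β m)) m)
      atTop (𝓝 (Real.exp (-(Fintype.card ι : ℝ) / (2 * Fintype.card ι - 2)))) := by
  classical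
  choose τ hτ using fun m => isPerfectMatching_iff_exists_adj_iff.1 (hM m)
  have hpairing : ∀ m, IsPairing Sigma.fst (balancedType ι m) (τ m) := fun m =>
    (isPairing_iff_crossCount_eq le_rfl (hτ m)).2 (hbal m)
  have hcard : ∀ m i, #{u : Σ i, β m i | u.1 = i} = (Fintype.card ι - 1) * m := fun m i =>
    (card_filter_fst_eq i).trans (hβ m i)
  have adj_apply : ∀ m, ∀ σ ∈ pairings Sigma.fst (balancedType ι m), ∀ u,
      (completeMultipartiteGraph (β m)).Adj u (σ u) := fun m σ hσ u =>
    ((mem_pairings.1 hσ).color_apply_ne (fun i => by rw [hcard, typeDegree_balancedType])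
      (balancedType_diag m) u).symm
  convert tendsto_card_avoiding_div hcard hpairing using 4 with m
  · rw [bpmCount_eq_card sdiff_le]
    congr 1
    refine filter_congr fun σ hσ => forall_congr' fun u => ?_
    simp only [sdiff_adj, Subgraph.spanningCoe_adj, hτ, adj_apply m σ hσ u, true_and]
    exact ne_comm
  · rw [bpmCount_eq_card le_rfl, filter_true_of_mem (adj_apply m)]
  · ring

/-- For fixed `r ≥ 3` and any sequence of balanced perfect matchings `M m` of the
complete `r`-partite graph with classes of size `(r-1)m`, the proportion of balanced
perfect matchings avoiding `M m` tends to `e^{-r/(2r-2)}` as `m → ∞`. -/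
theorem stmt_13 (r : ℕ) (hr : 3 ≤ r)
    (M : ∀ m : ℕ,
      (completeMultipartiteGraph (fun _ : Fin r => Fin ((r - 1) * m))).Subgraph)
    (hM : ∀ m, (M m).IsPerfectMatching)
    (hbal : ∀ m, ∀ i j : Fin r, i ≠ j → crossCount (M m) i j = m) :
    Tendsto
      (fun m : ℕ =>
        (bpmCount (completeMultipartiteGraph (fun _ : Fin r => Fin ((r - 1) * m)) \
            (M m).spanningCoe) m : ℝ) /
          (bpmCount (completeMultipartiteGraph (fun _ : Fin r => Fin ((r - 1) * m))) m : ℝ))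
      atTop (𝓝 (Real.exp (-(r : ℝ) / (2 * (r : ℝ) - 2)))) := by
  have : Nontrivial (Fin r) := Fin.nontrivial_iff_two_le.2 (by omega)
  simpa using stmt_13_general (by simp) M hM hbal
end
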